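/- Suppose Assumptions (K) and (A_p) hold, let ε₀ = R/(8M), and denote rₙ = R/(n+1) and R_k = 2R − k·rₙ for k = 0,…,n+1. For every positive integer n and every ε > 0 with (n+1)ε ≤ ε₀: the maps Φ^[k], k = 0,…,n, of the stroboscopic averaging iteration are analytic in u on K_{R_k}; both Φ^[n] and its average ⟨Φ^[n]⟩ are invertible with analytic inverse on K_R; each Φ^[k] is (p+1) times continuously differentiable with respect to θ, its θ-derivatives are analytic in u on K_{R_k}, and for all k = 0,…,n and all 1 ≤ ν ≤ p+1 one has ‖∂_θ^ν Φ^[k]‖_{R_k} ≤ 8·ε·M·ν!. -/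

import Mathlib

open Set

/-- The set `K_ρ = {u + ũ : u ∈ closure K, ‖ũ‖ ≤ ρ}` inside the complexification `Xc` of `X`. -/
def Kset {X Xc : Type*} [NormedAddCommGroup X] [NormedSpace ℝ X]
    [NormedAddCommGroup Xc] [NormedSpace ℂ Xc]
    (ι : X →ₗᵢ[ℝ] Xc) (K : Set X) (ρ : ℝ) : Set Xc :=
  {z | ∃ u ∈ closure K, ∃ w : Xc, ‖w‖ ≤ ρ ∧ z = ι u + w}

/-- θ-average `⟨g⟩(u) = ∫₀¹ g_θ(u) dθ` of a 1-periodic map. -/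
noncomputable def thAvg {Xc : Type*} [NormedAddCommGroup Xc] [NormedSpace ℂ Xc]
    (g : ℝ → Xc → Xc) (u : Xc) : Xc :=
  ∫ θ in (0:ℝ)..1, g θ u

/-- Averaged vector field `F(u) = (∂_u⟨φ⟩(u))⁻¹ ⟨f∘φ⟩(u)`. -/
noncomputable def aveField {Xc : Type*} [NormedAddCommGroup Xc] [NormedSpace ℂ Xc]
    (f φ : ℝ → Xc → Xc) (u : Xc) : Xc :=
  (fderiv ℂ (thAvg φ) u).inverse (thAvg (fun θ v => f θ (φ θ v)) u)

/-- The stroboscopic averaging iteration: `Φ^[0] = id` and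
`Φ^[k+1]_θ(u) = u + ε ∫₀^θ ( f_τ(Φ^[k]_τ(u)) − ∂_uΦ^[k]_τ(u) F^[k](u) ) dτ`. -/
noncomputable def PhiIter {Xc : Type*} [NormedAddCommGroup Xc] [NormedSpace ℂ Xc]
    (f : ℝ → Xc → Xc) (ε : ℝ) : ℕ → ℝ → Xc → Xc
  | 0 => fun _ u => u
  | k+1 => fun θ u => u + ε • ∫ τ in (0:ℝ)..θ,
      (f τ (PhiIter f ε k τ u) -
        fderiv ℂ (PhiIter f ε k τ) u (aveField f (PhiIter f ε k) u))

open Metric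
universe us

section GeneralHolomorphy

variable {E Y : Type*} [NormedAddCommGroup E] [NormedSpace ℂ E]
  [NormedAddCommGroup Y] [NormedSpace ℂ Y]

theorem sa_line_hasDerivAt {f : E → Y} {x w : E} {z : ℂ}
    (h : DifferentiableAt ℂ f (x + z • w)) :
    HasDerivAt (fun z : ℂ => f (x + z • w)) (fderiv ℂ f (x + z • w) w) z := by
  have h1 : HasDerivAt (fun z : ℂ => x + z • w) w z := by
    have := ((hasDerivAt_id z).smul_const w).const_add x
    simpa using this
  exact h.hasFDerivAt.comp_hasDerivAt z h1

/-- Cauchy estimate for the Fréchet derivative. -/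
theorem sa_cauchy {f : E → Y} {x : E} {δ C : ℝ} (hδ : 0 < δ)
    (hf : DifferentiableOn ℂ f (ball x δ)) (hC : ∀ y ∈ ball x δ, ‖f y‖ ≤ C) :
    ‖fderiv ℂ f x‖ ≤ C / δ := by
  have hC0 : 0 ≤ C := (norm_nonneg _).trans (hC x (mem_ball_self hδ))
  refine ContinuousLinearMap.opNorm_le_bound _ (by positivity) fun w => ?_
  rcases eq_or_ne w 0 with rfl | hw
  · simp
  have hwn : 0 < ‖w‖ := norm_pos_iff.mpr hw
  have key : ∀ d, 0 < d → d < δ → ‖fderiv ℂ f x w‖ ≤ C * ‖w‖ / d := by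
    intro d hd hdδ
    have hmem : ∀ z ∈ closedBall (0:ℂ) (d / ‖w‖), x + z • w ∈ ball x δ := by
      intro z hz
      have h1 : ‖z‖ ≤ d / ‖w‖ := by simpa using hz
      rw [le_div_iff₀ hwn] at h1
      simp only [mem_ball, dist_eq_norm, add_sub_cancel_left, norm_smul]
      linarith
    have hD : ∀ z ∈ closedBall (0:ℂ) (d / ‖w‖),
        HasDerivAt (fun z : ℂ => f (x + z • w)) (fderiv ℂ f (x + z • w) w) z := fun z hz =>
      sa_line_hasDerivAt ((hf _ (hmem z hz)).differentiableAt (isOpen_ball.mem_nhds (hmem z hz)))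
    have hdw : 0 < d / ‖w‖ := by positivity
    have h2 := Complex.norm_deriv_le_of_forall_mem_sphere_norm_le (c := 0) (R := d / ‖w‖) (C := C)
      (f := fun z : ℂ => f (x + z • w)) hdw ?_ ?_
    · rw [(hD 0 (mem_closedBall_self hdw.le)).deriv] at h2
      simp only [zero_smul, add_zero] at h2
      convert h2 using 1
      field_simp
    · refine DifferentiableOn.diffContOnCl ?_
      rw [closure_ball _ hdw.ne']
      exact fun z hz => (hD z hz).differentiableAt.differentiableWithinAt
    · intro z hz
      exact hC _ (hmem z (sphere_subset_closedBall hz))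
  by_contra hcon
  push Not at hcon
  have ha : 0 < ‖fderiv ℂ f x w‖ := lt_of_le_of_lt (by positivity) hcon
  have : C * ‖w‖ / ‖fderiv ℂ f x w‖ < δ := by
    rw [div_lt_iff₀ ha]
    rw [div_mul_eq_mul_div, div_lt_iff₀ hδ] at hcon
    linarith
  obtain ⟨d, hd1, hd2⟩ := exists_between this
  have hd0 : 0 < d := lt_of_le_of_lt (by positivity) hd1
  have := key d hd0 hd2
  rw [le_div_iff₀ hd0] at this
  rw [div_lt_iff₀ ha] at hd1
  linarith

theorem sa_cauchy_bound_on {f : E → Y} {u y : E} {δ δ' C : ℝ}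
    (hf : DifferentiableOn ℂ f (ball u δ)) (hC : ∀ y ∈ ball u δ, ‖f y‖ ≤ C)
    (hd : δ' < δ) (hy : y ∈ closedBall u δ') : ‖fderiv ℂ f y‖ ≤ C / (δ - δ') := by
  have hsub : ball y (δ - δ') ⊆ ball u δ := by
    apply ball_subset_ball'
    have := mem_closedBall.mp hy
    linarith
  exact sa_cauchy (by linarith) (hf.mono hsub) (fun z hz => hC z (hsub hz))

theorem sa_lip {f : E → Y} {u x y : E} {δ δ' C : ℝ}
    (hf : DifferentiableOn ℂ f (ball u δ)) (hC : ∀ y ∈ ball u δ, ‖f y‖ ≤ C)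
    (hd : δ' < δ) (hx : x ∈ closedBall u δ') (hy : y ∈ closedBall u δ') :
    ‖f x - f y‖ ≤ C / (δ - δ') * ‖x - y‖ := by
  refine Convex.norm_image_sub_le_of_norm_fderiv_le (𝕜 := ℂ) (s := closedBall u δ')
    (fun z hz => ?_) (fun z hz => sa_cauchy_bound_on hf hC hd hz) (convex_closedBall u δ') hy hx
  have hz' : z ∈ ball u δ := lt_of_le_of_lt (mem_closedBall.mp hz) hd
  exact (hf z hz').differentiableAt (isOpen_ball.mem_nhds hz')

theorem sa_taylor2 {f : E → Y} {x v : E} {δ C : ℝ} (hδ : 0 < δ)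
    (hf : DifferentiableOn ℂ f (ball x δ)) (hC : ∀ y ∈ ball x δ, ‖f y‖ ≤ C) (hv : ‖v‖ < δ) :
    ‖f (x + v) - f x - fderiv ℂ f x v‖ ≤ 3 * C / δ ^ 2 * ‖v‖ ^ 2 := by
  set L := fderiv ℂ f x with hL
  have hLn : ‖L‖ ≤ C / δ := sa_cauchy hδ hf hC
  have hxm : x ∈ ball x δ := mem_ball_self hδ
  have hd : HasFDerivAt f L x := ((hf x hxm).differentiableAt (isOpen_ball.mem_nhds hxm)).hasFDerivAt
  let h : E → Y := fun z => f z - f x - L (z - x)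
  have hhx : h x = 0 := by simp [h]
  have hhd : DifferentiableOn ℂ h (ball x δ) := by
    refine (hf.sub_const _).sub ?_
    exact (L.differentiable.comp (differentiable_id.sub_const x)).differentiableOn
  have key := Complex.dist_le_mul_div_pow_of_mapsTo_ball_of_isLittleO (f := h) (c := x)
    (z := x + v) (R₁ := δ) (R₂ := 3 * C) (n := 1) hhd ?_ ?_ ?_
  · rw [hhx, dist_zero_right] at key
    have e : dist (x + v) x = ‖v‖ := by simp [dist_eq_norm]
    rw [e] at key
    have : h (x + v) = f (x + v) - f x - L v := by simp [h]
    rw [this] at key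
    refine key.trans (le_of_eq ?_)
    norm_num
    ring
  · intro z hz
    rw [hhx, mem_closedBall, dist_zero_right]
    have h1 := hC z hz
    have h2 := hC x hxm
    have hz' : ‖z - x‖ < δ := by simpa [dist_eq_norm] using hz
    have h3 : ‖L (z - x)‖ ≤ C := by
      refine (L.le_opNorm _).trans ?_
      calc ‖L‖ * ‖z - x‖ ≤ C / δ * δ :=
            mul_le_mul hLn hz'.le (norm_nonneg _) ((norm_nonneg _).trans hLn)
        _ = C := by field_simp
    calc ‖h z‖ ≤ ‖f z - f x‖ + ‖L (z - x)‖ := norm_sub_le _ _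
      _ ≤ ‖f z‖ + ‖f x‖ + ‖L (z - x)‖ := by gcongr; exact norm_sub_le _ _
      _ ≤ 3 * C := by linarith
  · simp only [hhx, sub_zero, pow_one]
    exact hd.isLittleO.norm_right
  · simpa [dist_eq_norm] using hv

theorem sa_hasFDerivAt_of_quad {f : E → Y} {L : E →L[ℂ] Y} {u : E} {δ C : ℝ} (hδ : 0 < δ)
    (h : ∀ v, ‖v‖ < δ → ‖f (u + v) - f u - L v‖ ≤ C * ‖v‖ ^ 2) : HasFDerivAt f L u := by
  have h1 : (fun y => f y - f u - L (y - u)) =O[nhds u] fun y => ‖y - u‖ ^ 2 := by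
    refine Asymptotics.IsBigO.of_bound C ?_
    filter_upwards [ball_mem_nhds u hδ] with y hy
    have := h (y - u) (by simpa [dist_eq_norm] using hy)
    simpa using this
  have h2 := h1.hasFDerivAt (𝕜 := ℂ) (by norm_num)
  have h3 : HasFDerivAt (fun y => L (y - u)) L u := by
    have h5 := L.hasFDerivAt.sub_const (L u) (x := u)
    simpa only [map_sub] using h5
  have h4 := (h2.add h3).add_const (f u)
  convert! h4 using 1
  · ext y; simp
  · simp

/-- Holomorphy of parameter integrals. -/
theorem sa_intDiff [CompleteSpace Y] {U : Set E} (hU : IsOpen U) {a b C : ℝ} {h : ℝ → E → Y}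
    (hd : ∀ t ∈ uIcc a b, DifferentiableOn ℂ (h t) U)
    (hc : ∀ u ∈ U, ContinuousOn (fun t => h t u) (uIcc a b))
    (hC : ∀ t ∈ uIcc a b, ∀ u ∈ U, ‖h t u‖ ≤ C) {u : E} (hu : u ∈ U) :
    ∃ L : E →L[ℂ] Y, HasFDerivAt (fun v => ∫ t in a..b, h t v) L u ∧
      ∀ w, IntervalIntegrable (fun t => fderiv ℂ (h t) u w) MeasureTheory.volume a b ∧
        L w = ∫ t in a..b, fderiv ℂ (h t) u w := by
  obtain ⟨δ, hδ, hball⟩ := Metric.isOpen_iff.mp hU u hu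
  have hC0 : 0 ≤ C := (norm_nonneg _).trans (hC a left_mem_uIcc u hu)
  have hB : ∀ t ∈ uIcc a b, ‖fderiv ℂ (h t) u‖ ≤ C / δ := fun t ht =>
    sa_cauchy hδ ((hd t ht).mono hball) (fun y hy => hC t ht y (hball hy))
  have hBw : ∀ w, ∀ t ∈ uIcc a b, ‖fderiv ℂ (h t) u w‖ ≤ C / δ * ‖w‖ := fun w t ht =>
    (ContinuousLinearMap.le_opNorm _ _).trans (by gcongr; exact hB t ht)
  have hII : ∀ w, IntervalIntegrable (fun t => fderiv ℂ (h t) u w) MeasureTheory.volume a b := by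
    intro w
    rw [intervalIntegrable_iff]
    have hmeas : MeasureTheory.AEStronglyMeasurable (fun t => fderiv ℂ (h t) u w)
        (MeasureTheory.volume.restrict (uIoc a b)) := by
      -- limit of difference quotients
      obtain ⟨N, hN⟩ := exists_nat_gt (‖w‖ / δ)
      have hmem : ∀ n : ℕ, u + ((1:ℂ) / ((n:ℂ) + (N:ℂ) + 1)) • w ∈ U := by
        intro n
        apply hball
        have e : ((n:ℂ) + (N:ℂ) + 1) = (((n:ℝ) + N + 1 : ℝ) : ℂ) := by push_cast; ring
        have hpos : (0:ℝ) < (n:ℝ) + N + 1 := by positivity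
        rw [mem_ball, dist_eq_norm, add_sub_cancel_left, norm_smul, e, norm_div,
          Complex.norm_real, Real.norm_of_nonneg hpos.le, norm_one, one_div_mul_eq_div,
          div_lt_iff₀ hpos]
        rw [div_lt_iff₀ hδ] at hN
        nlinarith [(Nat.cast_nonneg n : (0:ℝ) ≤ n)]
      refine aestronglyMeasurable_of_tendsto_ae Filter.atTop (f := fun (n : ℕ) t =>
        ((1:ℂ) / ((n:ℂ) + (N:ℂ) + 1))⁻¹ •
          (h t (u + ((1:ℂ) / ((n:ℂ) + (N:ℂ) + 1)) • w) - h t u)) ?_ ?_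
      · intro n
        have : ContinuousOn (fun t => ((1:ℂ) / ((n:ℂ) + (N:ℂ) + 1))⁻¹ •
          (h t (u + ((1:ℂ) / ((n:ℂ) + (N:ℂ) + 1)) • w) - h t u)) (uIcc a b) :=
          ((hc _ (hmem n)).sub (hc _ hu)).const_smul _
        exact (this.mono uIoc_subset_uIcc).aestronglyMeasurable measurableSet_uIoc
      · filter_upwards [MeasureTheory.ae_restrict_mem measurableSet_uIoc] with t ht
        have ht' := uIoc_subset_uIcc ht
        have hdt : DifferentiableAt ℂ (h t) (u + (0:ℂ) • w) := by
          simpa using (hd t ht' u hu).differentiableAt (hU.mem_nhds hu)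
        have h1 := sa_line_hasDerivAt hdt
        rw [hasDerivAt_iff_tendsto_slope_zero] at h1
        simp only [zero_add, zero_smul, add_zero] at h1
        refine h1.comp ?_
        rw [tendsto_nhdsWithin_iff]
        constructor
        · have h2 : Filter.Tendsto (fun n : ℕ => (1:ℂ) / ((n:ℂ) + 1)) Filter.atTop (nhds 0) :=
            tendsto_one_div_add_atTop_nhds_zero_nat
          have h3 := h2.comp (Filter.tendsto_add_atTop_nat N)
          refine h3.congr fun n => ?_
          simp
        · refine Filter.Eventually.of_forall fun n => ?_
          have e : ((n:ℂ) + (N:ℂ) + 1) = ((n + N + 1 : ℕ) : ℂ) := by push_cast; ring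
          simp only [mem_compl_iff, mem_singleton_iff, e]
          exact one_div_ne_zero (Nat.cast_ne_zero.mpr (by omega))
    refine MeasureTheory.IntegrableOn.of_bound ?_ hmeas (C / δ * ‖w‖) ?_
    · simp [uIoc]
    · filter_upwards [MeasureTheory.ae_restrict_mem measurableSet_uIoc] with t ht
      exact hBw w t (uIoc_subset_uIcc ht)
  let L0 : E →ₗ[ℂ] Y :=
    { toFun := fun w => ∫ t in a..b, fderiv ℂ (h t) u w
      map_add' := by
        intro w1 w2
        simp only [map_add]
        exact intervalIntegral.integral_add (hII w1) (hII w2)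
      map_smul' := by
        intro c w
        simp only [map_smul, RingHom.id_apply]
        exact intervalIntegral.integral_smul c _ }
  let L : E →L[ℂ] Y := L0.mkContinuous (C / δ * |b - a|) (by
    intro w
    have := intervalIntegral.norm_integral_le_of_norm_le_const (a := a) (b := b)
      (f := fun t => fderiv ℂ (h t) u w) (C := C / δ * ‖w‖)
      (fun t ht => hBw w t (uIoc_subset_uIcc ht))
    refine this.trans (le_of_eq ?_)
    ring)
  refine ⟨L, ?_, fun w => ⟨hII w, rfl⟩⟩
  have hIh : ∀ v ∈ U, IntervalIntegrable (fun t => h t v) MeasureTheory.volume a b :=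
    fun v hv => (hc v hv).intervalIntegrable
  refine sa_hasFDerivAt_of_quad (C := 3 * C / δ ^ 2 * |b - a|) hδ fun v hv => ?_
  have hvU : u + v ∈ U := hball (by simpa [dist_eq_norm] using hv)
  have e : (∫ t in a..b, h t (u + v)) - (∫ t in a..b, h t u) - L v
      = ∫ t in a..b, (h t (u + v) - h t u - fderiv ℂ (h t) u v) := by
    rw [intervalIntegral.integral_sub ((hIh _ hvU).sub (hIh _ hu)) (hII v),
      intervalIntegral.integral_sub (hIh _ hvU) (hIh _ hu)]
    rfl
  rw [e]
  refine (intervalIntegral.norm_integral_le_of_norm_le_const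
    (C := 3 * C / δ ^ 2 * ‖v‖ ^ 2) fun t ht => ?_).trans (le_of_eq (by ring))
  have ht' := uIoc_subset_uIcc ht
  exact sa_taylor2 hδ ((hd t ht').mono hball) (fun y hy => hC t ht' y (hball hy)) hv

end GeneralHolomorphy

section GeneralHolomorphy2

variable {E Y : Type*} [NormedAddCommGroup E] [NormedSpace ℂ E]
  [NormedAddCommGroup Y] [NormedSpace ℂ Y]

theorem sa_dirderiv_diff [CompleteSpace Y] {f : E → Y} {u w : E} {δ C : ℝ} (hδ : 0 < δ)
    (hf : DifferentiableOn ℂ f (ball u (2*δ))) (hC : ∀ y ∈ ball u (2*δ), ‖f y‖ ≤ C) :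
    DifferentiableOn ℂ (fun y => fderiv ℂ f y w) (ball u δ) := by
  set ρ : ℝ := δ / (‖w‖ + 1) with hρ
  have hw1 : 0 < ‖w‖ + 1 := by positivity
  have hρ0 : 0 < ρ := by positivity
  have hρw : ρ * ‖w‖ < δ := by
    rw [hρ, div_mul_eq_mul_div, div_lt_iff₀ hw1]
    nlinarith [norm_nonneg w]
  have hmem : ∀ y ∈ ball u δ, ∀ z ∈ closedBall (0:ℂ) ρ, y + z • w ∈ ball u (2*δ) := by
    intro y hy z hz
    rw [mem_ball_iff_norm] at hy ⊢
    have h1 : ‖z‖ ≤ ρ := by simpa using hz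
    calc ‖y + z • w - u‖ = ‖(y - u) + z • w‖ := by congr 1; abel
      _ ≤ ‖y - u‖ + ‖z‖ * ‖w‖ := (norm_add_le _ _).trans (by rw [norm_smul])
      _ < 2*δ := by nlinarith [norm_nonneg w, mul_le_mul_of_nonneg_right h1 (norm_nonneg w)]
  have hform : ∀ y ∈ ball u δ, fderiv ℂ f y w = (2 * Real.pi * Complex.I : ℂ)⁻¹ •
      ∫ t in (0:ℝ)..(2*Real.pi), deriv (circleMap 0 ρ) t •
        (((circleMap 0 ρ t) - 0)^2)⁻¹ • f (y + circleMap 0 ρ t • w) := by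
    intro y hy
    have hU : IsOpen {z : ℂ | y + z • w ∈ ball u (2*δ)} :=
      isOpen_ball.preimage (by fun_prop)
    have hd : DifferentiableOn ℂ (fun z : ℂ => f (y + z • w)) {z : ℂ | y + z • w ∈ ball u (2*δ)} := by
      intro z hz
      exact (sa_line_hasDerivAt (hf.differentiableAt (isOpen_ball.mem_nhds hz))).differentiableAt.differentiableWithinAt
    have := Complex.two_pi_I_inv_smul_circleIntegral_sub_sq_inv_smul_of_differentiable
      (w₀ := 0) (c := 0) hU (fun z hz => hmem y hy z hz) hd (mem_ball_self hρ0)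
    rw [circleIntegral] at this
    rw [this]
    have h2 := sa_line_hasDerivAt (f := f) (x := y) (w := w) (z := 0)
      (by simpa using hf.differentiableAt (isOpen_ball.mem_nhds (by simpa using hmem y hy 0 (by simp [hρ0.le]))))
    rw [h2.deriv]; simp
  have hcirc : ∀ t, circleMap 0 ρ t ∈ closedBall (0:ℂ) ρ := fun t =>
    circleMap_mem_closedBall 0 hρ0.le t
  have hne : ∀ t, circleMap 0 ρ t ≠ 0 := fun t => circleMap_ne_center hρ0.ne'
  intro y hy
  obtain ⟨L, hL, -⟩ := sa_intDiff (U := ball u δ) (a := 0) (b := 2*Real.pi) (C := ρ * (ρ^2)⁻¹ * C)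
    (h := fun t y => deriv (circleMap 0 ρ) t •
        (((circleMap 0 ρ t) - 0)^2)⁻¹ • f (y + circleMap 0 ρ t • w)) isOpen_ball
    (by
      intro t _ y hy
      have h1 : DifferentiableAt ℂ f (y + circleMap 0 ρ t • w) :=
        hf.differentiableAt (isOpen_ball.mem_nhds (hmem y hy _ (hcirc t)))
      have h2 : DifferentiableAt ℂ (fun y => f (y + circleMap 0 ρ t • w)) y :=
        h1.comp y (by fun_prop)
      exact ((h2.const_smul _).const_smul _).differentiableWithinAt)
    (by
      intro y hy
      apply Continuous.continuousOn
      have h0 : Continuous (circleMap 0 ρ) := continuous_circleMap 0 ρ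
      have h1 : Continuous (fun t => f (y + circleMap 0 ρ t • w)) := by
        rw [continuous_iff_continuousAt]
        intro t
        have h1 : ContinuousAt f (y + circleMap 0 ρ t • w) :=
          (hf.differentiableAt (isOpen_ball.mem_nhds (hmem y hy _ (hcirc t)))).continuousAt
        exact ContinuousAt.comp (f := fun t => y + circleMap 0 ρ t • w) h1 (by fun_prop)
      have h2 : Continuous (fun t => deriv (circleMap 0 ρ) t) := by
        simp only [deriv_circleMap]; fun_prop
      have h3 : Continuous (fun t => (((circleMap 0 ρ t) - 0)^2)⁻¹) := by
        apply Continuous.inv₀ (by fun_prop)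
        intro t; simpa using hne t
      exact h2.smul (h3.smul h1))
    (by
      intro t _ y hy
      rw [norm_smul, norm_smul]
      have : ‖f (y + circleMap 0 ρ t • w)‖ ≤ C := hC _ (hmem y hy _ (hcirc t))
      simp only [deriv_circleMap, sub_zero, norm_mul, norm_inv, norm_pow, norm_circleMap_zero, Complex.norm_I, mul_one, abs_of_pos hρ0]
      rw [← mul_assoc]
      gcongr) hy
  have h3 := (hL.const_smul (2 * Real.pi * Complex.I : ℂ)⁻¹).differentiableAt
  refine (h3.congr_of_eventuallyEq ?_).differentiableWithinAt
  filter_upwards [isOpen_ball.mem_nhds hy] with y hy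
  exact hform y hy

theorem sa_locbdd {f : E → Y} {U : Set E} (hU : IsOpen U) (hf : DifferentiableOn ℂ f U) {u : E} (hu : u ∈ U) :
    ∃ δ C : ℝ, 0 < δ ∧ ball u δ ⊆ U ∧ ∀ y ∈ ball u δ, ‖f y‖ ≤ C := by
  have hc : ContinuousAt f u := (hf.differentiableAt (hU.mem_nhds hu)).continuousAt
  have h1 : ∀ᶠ y in nhds u, ‖f y‖ < ‖f u‖ + 1 := hc.norm.eventually_lt_const (by linarith)
  obtain ⟨δ, hδ, h⟩ := Metric.mem_nhds_iff.1 (Filter.inter_mem (hU.mem_nhds hu) h1)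
  exact ⟨δ, ‖f u‖ + 1, hδ, fun y hy => (h hy).1, fun y hy => le_of_lt (h hy).2⟩

/-- Goursat: the derivative of a holomorphic map is holomorphic. -/
theorem sa_fderiv_diff [CompleteSpace Y] {f : E → Y} {U : Set E} (hU : IsOpen U)
    (hf : DifferentiableOn ℂ f U) : DifferentiableOn ℂ (fderiv ℂ f) U := by
  intro u hu
  apply DifferentiableAt.differentiableWithinAt
  obtain ⟨δ0, C, hδ0, hsub, hC⟩ := sa_locbdd hU hf hu
  obtain ⟨δ, rfl⟩ : ∃ δ, δ0 = 2*δ := ⟨δ0/2, by ring⟩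
  have hδ : 0 < δ := by linarith
  have hfb := hf.mono hsub
  have hD : ∀ w, DifferentiableOn ℂ (fun y => fderiv ℂ f y w) (ball u δ) := fun w =>
    sa_dirderiv_diff hδ hfb hC
  have hb : ∀ y ∈ ball u δ, ‖fderiv ℂ f y‖ ≤ C / δ := by
    intro y hy
    have hs : ball y δ ⊆ ball u (2*δ) := ball_subset_ball' (by have := mem_ball.1 hy; linarith)
    exact sa_cauchy hδ (hfb.mono hs) (fun z hz => hC z (hs hz))
  have hDb : ∀ w, ∀ y ∈ ball u δ, ‖fderiv ℂ f y w‖ ≤ C / δ * ‖w‖ := fun w y hy =>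
    (ContinuousLinearMap.le_opNorm _ _).trans (by gcongr; exact hb y hy)
  have hDu : ∀ w, DifferentiableAt ℂ (fun y => fderiv ℂ f y w) u := fun w =>
    (hD w).differentiableAt (isOpen_ball.mem_nhds (mem_ball_self hδ))
  let B0 : E →ₗ[ℂ] (E →L[ℂ] Y) :=
    { toFun := fun w => fderiv ℂ (fun y => fderiv ℂ f y w) u
      map_add' := by
        intro w1 w2
        simp only [map_add]
        exact fderiv_add (hDu w1) (hDu w2)
      map_smul' := by
        intro c w
        simp only [map_smul, RingHom.id_apply]
        exact fderiv_const_smul (hDu w) c }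
  let B : E →L[ℂ] (E →L[ℂ] Y) := B0.mkContinuous (C/δ/δ) (by
    intro w
    have := sa_cauchy hδ (hD w) (hDb w)
    calc ‖B0 w‖ ≤ C / δ * ‖w‖ / δ := this
      _ = _ := by ring)
  refine (sa_hasFDerivAt_of_quad (L := B.flip) (C := 3 * (C/δ) / δ^2) hδ ?_).differentiableAt
  intro v hv
  have hC0 : 0 ≤ C := (norm_nonneg _).trans (hC u (mem_ball_self hδ0))
  refine ContinuousLinearMap.opNorm_le_bound _ (by positivity) fun w => ?_
  have := sa_taylor2 hδ (hD w) (hDb w) hv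
  calc _ = ‖fderiv ℂ f (u+v) w - fderiv ℂ f u w - fderiv ℂ (fun y => fderiv ℂ f y w) u v‖ := by
        simp [B, B0]
    _ ≤ _ := this
    _ = _ := by ring


theorem sa_iter_diff [CompleteSpace Y] {f : E → Y} {U : Set E} (hU : IsOpen U)
    (hf : DifferentiableOn ℂ f U) (n : ℕ) : DifferentiableOn ℂ (iteratedFDeriv ℂ n f) U := by
  induction n with
  | zero =>
    rw [iteratedFDeriv_zero_eq_comp]
    intro y hy
    exact ((continuousMultilinearCurryFin0 ℂ E Y).symm.differentiable.differentiableAt.comp_differentiableWithinAt y (hf y hy))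
  | succ n ih =>
    rw [iteratedFDeriv_succ_eq_comp_left]
    intro y hy
    exact ((continuousMultilinearCurryLeftEquiv ℂ (fun _ : Fin (n + 1) => E) Y).symm.differentiable.differentiableAt.comp_differentiableWithinAt y (sa_fderiv_diff hU ih y hy))

theorem sa_iter_bound [CompleteSpace Y] {f : E → Y} {x : E} {ρ C d : ℝ} (hd : 0 < d)
    (hf : DifferentiableOn ℂ f (ball x ρ)) (hC : ∀ y ∈ ball x ρ, ‖f y‖ ≤ C) (j : ℕ) :
    ∀ y ∈ ball x (ρ - j * d), ‖iteratedFDeriv ℂ j f y‖ ≤ C / d ^ j := by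
  induction j with
  | zero => intro y hy; simpa using hC y (by simpa using hy)
  | succ j ih =>
    intro y hy
    have hs : ball y d ⊆ ball x (ρ - j * d) := ball_subset_ball' (by
      have := mem_ball.1 hy; push_cast at this; linarith)
    have hs2 : ball x (ρ - j * d) ⊆ ball x ρ := ball_subset_ball (by
      have : 0 ≤ (j:ℝ) * d := by positivity
      linarith)
    rw [← norm_fderiv_iteratedFDeriv]
    have := sa_cauchy hd ((sa_iter_diff isOpen_ball hf j).mono (hs.trans hs2)) (fun z hz => ih z (hs hz))
    rwa [div_div, ← pow_succ] at this

theorem sa_line_iter [CompleteSpace Y] {f : E → Y} {U : Set E} (hU : IsOpen U)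
    (hf : DifferentiableOn ℂ f U) (x y : E) (n : ℕ) : ∀ z : ℂ, x + z • y ∈ U →
    iteratedDeriv n (fun z : ℂ => f (x + z • y)) z = iteratedFDeriv ℂ n f (x + z • y) (fun _ => y) := by
  induction n with
  | zero => intro z hz; simp
  | succ n ih =>
    intro z hz
    have hV : IsOpen {z : ℂ | x + z • y ∈ U} := hU.preimage (by fun_prop)
    rw [iteratedDeriv_succ]
    have h1 : iteratedDeriv n (fun z : ℂ => f (x + z • y)) =ᶠ[nhds z]
        fun z => iteratedFDeriv ℂ n f (x + z • y) (fun _ => y) := by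
      filter_upwards [hV.mem_nhds hz] with z' hz' using ih z' hz'
    rw [h1.deriv_eq]
    have h2 := sa_line_hasDerivAt ((sa_iter_diff hU hf n).differentiableAt (hU.mem_nhds hz))
    let A := ContinuousMultilinearMap.apply ℂ (fun _ : Fin n => E) Y (fun _ => y)
    have h3 := (A.hasFDerivAt (x := iteratedFDeriv ℂ n f (x + z • y))).comp_hasDerivAt z h2
    exact h3.deriv

theorem sa_analytic [CompleteSpace Y] {f : E → Y} {U : Set E} (hU : IsOpen U)
    (hf : DifferentiableOn ℂ f U) : AnalyticOnNhd ℂ f U := by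
  intro x hx
  obtain ⟨ρ, C, hρ, hsub, hC⟩ := sa_locbdd hU hf hx
  replace hf := hf.mono hsub
  have hC0 : 0 ≤ C := (norm_nonneg _).trans (hC x (mem_ball_self hρ))
  set e := Real.exp 1 with he
  have he0 : 0 < e := Real.exp_pos 1
  have he1 : 1 < e := by rw [he]; simp
  let r : NNReal := ⟨ρ / e, by positivity⟩
  have hr : (r : ℝ) = ρ / e := rfl
  let P : FormalMultilinearSeries ℂ E Y := fun n => ((n.factorial : ℂ)⁻¹) • iteratedFDeriv ℂ n f x
  refine ⟨P, r, ⟨?_, ?_, ?_⟩⟩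
  · refine P.le_radius_of_bound (C * e) fun n => ?_
    have hd : 0 < ρ / (n+1) := by positivity
    have h1 := sa_iter_bound hd hf hC n x (mem_ball_self (by
      have : (n:ℝ) * (ρ / (n+1)) < ρ := by
        rw [mul_div_assoc', div_lt_iff₀ (by positivity)]; nlinarith
      linarith))
    have h2 : ((n:ℝ)+1)^n / n.factorial ≤ Real.exp (n+1) :=
      Real.pow_div_factorial_le_exp _ (by positivity) n
    have h3 : Real.exp (n+1) = e ^ n * e := by
      rw [Real.exp_add, he, ← Real.exp_nat_mul]; simp
    have h4 : ‖P n‖ = (n.factorial : ℝ)⁻¹ * ‖iteratedFDeriv ℂ n f x‖ := by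
      simp [P, norm_smul]
    rw [h4, hr]
    have hf0 : (0:ℝ) < n.factorial := by positivity
    calc (n.factorial : ℝ)⁻¹ * ‖iteratedFDeriv ℂ n f x‖ * (ρ/e)^n
        ≤ (n.factorial : ℝ)⁻¹ * (C / (ρ/(n+1))^n) * (ρ/e)^n := by gcongr
      _ = C * (((n:ℝ)+1)^n / n.factorial) / e^n := by
          simp only [div_pow]; field_simp
      _ ≤ C * (e^n * e) / e^n := by gcongr; rw [← h3]; exact h2
      _ = C * e := by field_simp
  · simp only [ENNReal.coe_pos]; rw [← NNReal.coe_pos, hr]; positivity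
  · intro y hy
    have hy' : ‖y‖ < ρ / e := by
      rw [Metric.eball_coe] at hy
      simpa [hr] using hy
    have hmem : ∀ z ∈ ball (0:ℂ) e, x + z • y ∈ ball x ρ := by
      intro z hz
      have : ‖z‖ < e := by simpa using hz
      rw [mem_ball_iff_norm]
      simp only [add_sub_cancel_left, norm_smul]
      calc ‖z‖ * ‖y‖ ≤ e * ‖y‖ := by gcongr
        _ < e * (ρ / e) := by gcongr
        _ = ρ := by field_simp
    have hd : DifferentiableOn ℂ (fun z : ℂ => f (x + z • y)) (ball 0 e) := fun z hz =>
      (sa_line_hasDerivAt (hf.differentiableAt (isOpen_ball.mem_nhds (hmem z hz)))).differentiableAt.differentiableWithinAt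
    have := Complex.hasSum_taylorSeries_on_ball hd (z := 1) (by simpa using he1)
    simp only [one_smul, sub_zero, one_pow] at this
    convert this using 2 with n
    rw [sa_line_iter isOpen_ball hf x y n 0 (by simpa using hρ)]
    simp [P]

end GeneralHolomorphy2

set_option linter.unusedVariables false
section ThetaClasses

/-- Families `g ν θ u`, `ν ≤ m`, of successive θ-derivatives, holomorphic and locally bounded in
`u ∈ U`. -/
structure SaHC {E Y : Type*} [NormedAddCommGroup E] [NormedSpace ℂ E]
    [NormedAddCommGroup Y] [NormedSpace ℂ Y] (m : ℕ) (g : ℕ → ℝ → E → Y) (U : Set E) : Prop where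
  der : ∀ ν < m, ∀ θ, ∀ u ∈ U, HasDerivAt (fun τ => g ν τ u) (g (ν+1) θ u) θ
  cont : ∀ ν ≤ m, ∀ u ∈ U, Continuous (fun θ => g ν θ u)
  diff : ∀ ν ≤ m, ∀ θ, DifferentiableOn ℂ (g ν θ) U
  bdd : ∀ ν ≤ m, ∀ u ∈ U, ∃ δ C : ℝ, 0 < δ ∧ ball u δ ⊆ U ∧ ∀ θ, ∀ y ∈ ball u δ, ‖g ν θ y‖ ≤ C

variable {E Y : Type us} [NormedAddCommGroup E] [NormedSpace ℂ E]
  [NormedAddCommGroup Y] [NormedSpace ℂ Y]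

theorem sa_hc_mono {m m' : ℕ} {g : ℕ → ℝ → E → Y} {U V : Set E} (h : SaHC m g U) (hm : m' ≤ m)
    (hV : IsOpen V) (hVU : V ⊆ U) : SaHC m' g V := by
  refine ⟨fun ν hν θ u hu => h.der ν (by omega) θ u (hVU hu),
    fun ν hν u hu => h.cont ν (by omega) u (hVU hu),
    fun ν hν θ => (h.diff ν (by omega) θ).mono hVU, fun ν hν u hu => ?_⟩
  obtain ⟨δ, C, hδ, hs, hC⟩ := h.bdd ν (by omega) u (hVU hu)
  obtain ⟨δ', hδ', hs'⟩ := Metric.isOpen_iff.1 hV u hu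
  exact ⟨min δ δ', C, lt_min hδ hδ', (ball_subset_ball (min_le_right _ _)).trans hs',
    fun θ y hy => hC θ y (ball_subset_ball (min_le_left _ _) hy)⟩

theorem sa_lip_real {a a' : ℝ → Y} {C : ℝ} (ha : ∀ t, HasDerivAt a (a' t) t)
    (hC : ∀ t, ‖a' t‖ ≤ C) (x y : ℝ) : ‖a y - a x‖ ≤ C * |y - x| :=
  convex_univ.norm_image_sub_le_of_norm_hasDerivWithin_le
    (fun t _ => (ha t).hasDerivWithinAt) (fun t _ => hC t) (mem_univ x) (mem_univ y)

theorem sa_quad_real {a a' a2 : ℝ → Y} {C : ℝ} (ha : ∀ t, HasDerivAt a (a' t) t)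
    (ha' : ∀ t, HasDerivAt a' (a2 t) t)
    (hC : ∀ t, ‖a2 t‖ ≤ C) (x y : ℝ) : ‖a y - a x - (y - x) • a' x‖ ≤ C * |y - x| ^ 2 := by
  have h1 : ∀ t, HasDerivAt (fun t => a t - (t - x) • a' x) (a' t - a' x) t := by
    intro t
    have h2 : HasDerivAt (fun t : ℝ => (t - x) • a' x) ((1:ℝ) • a' x) t :=
      ((hasDerivAt_id t).sub_const x).smul_const (a' x)
    rw [one_smul] at h2
    exact (ha t).sub h2
  have h3 := (convex_uIcc x y).norm_image_sub_le_of_norm_hasDerivWithin_le (C := C * |y - x|)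
    (fun t _ => (h1 t).hasDerivWithinAt) (fun t ht => by
      have hC0 : 0 ≤ C := (norm_nonneg _).trans (hC 0)
      refine (sa_lip_real ha' hC x t).trans ?_
      exact mul_le_mul_of_nonneg_left (abs_sub_left_of_mem_uIcc ht) hC0) left_mem_uIcc right_mem_uIcc
  simp only [sub_self, zero_smul, sub_zero, Real.norm_eq_abs] at h3
  calc ‖a y - a x - (y - x) • a' x‖ = ‖a y - (y - x) • a' x - a x‖ := by congr 1; abel
    _ ≤ _ := h3
    _ = _ := by ring

theorem sa_hc_fderiv [CompleteSpace Y] {m : ℕ} {g : ℕ → ℝ → E → Y} {U : Set E} (hU : IsOpen U)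
    (h : SaHC (m+1) g U) : SaHC m (fun ν θ u => fderiv ℂ (g ν θ) u) U := by
  have hda : ∀ ν ≤ m+1, ∀ θ, ∀ u ∈ U, DifferentiableAt ℂ (g ν θ) u := fun ν hν θ u hu =>
    (h.diff ν hν θ).differentiableAt (hU.mem_nhds hu)
  refine ⟨?_, ?_, fun ν hν θ => sa_fderiv_diff hU (h.diff ν (by omega) θ), ?_⟩
  · intro ν hν θ u hu
    obtain ⟨δ, C, hδ, hs, hC⟩ := h.bdd (ν+2) (by omega) u hu
    have key : ∀ y, ‖fderiv ℂ (g ν y) u - fderiv ℂ (g ν θ) u - (y - θ) • fderiv ℂ (g (ν+1) θ) u‖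
        ≤ C / δ * |y - θ|^2 := by
      intro y
      have e : fderiv ℂ (fun v => g ν y v - g ν θ v - ((y - θ : ℝ) : ℂ) • g (ν+1) θ v) u =
          fderiv ℂ (g ν y) u - fderiv ℂ (g ν θ) u - (y - θ) • fderiv ℂ (g (ν+1) θ) u := by
        rw [fderiv_fun_sub, fderiv_fun_sub, fderiv_fun_const_smul, ← Complex.coe_smul]
        · exact hda (ν+1) (by omega) θ u hu
        · exact hda ν (by omega) y u hu
        · exact hda ν (by omega) θ u hu
        · exact (hda ν (by omega) y u hu).sub (hda ν (by omega) θ u hu)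
        · exact (hda (ν+1) (by omega) θ u hu).const_smul _
      rw [← e]
      have := sa_cauchy (f := fun v => g ν y v - g ν θ v - ((y - θ : ℝ) : ℂ) • g (ν+1) θ v)
        (C := C * |y - θ|^2) hδ
        ((((h.diff ν (by omega) y).sub (h.diff ν (by omega) θ)).sub
          ((h.diff (ν+1) (by omega) θ).const_smul _)).mono hs)
        (fun v hv => by
          have := sa_quad_real (fun t => h.der ν (by omega) t v (hs hv))
            (fun t => h.der (ν+1) (by omega) t v (hs hv)) (fun t => hC t v hv) θ y
          rwa [← Complex.coe_smul] at this)
      refine this.trans (le_of_eq (by ring))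
    rw [hasDerivAt_iff_isLittleO]
    refine Asymptotics.IsBigO.trans_isLittleO (g := fun y => (y - θ)^2) ?_ ?_
    · refine Asymptotics.IsBigO.of_bound (C/δ) (Filter.Eventually.of_forall fun y => ?_)
      simpa using key y
    · have h0 : (fun x : ℝ => x^2) =o[nhds 0] (fun x => x) := by
        simpa using Asymptotics.isLittleO_pow_id (𝕜 := ℝ) (n := 2) (by norm_num)
      have h1 : Filter.Tendsto (fun y : ℝ => y - θ) (nhds θ) (nhds 0) := by
        have : ContinuousAt (fun y : ℝ => y - θ) θ := by fun_prop
        simpa [ContinuousAt] using this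
      exact h0.comp_tendsto h1
  · intro ν hν u hu
    obtain ⟨δ, C, hδ, hs, hC⟩ := h.bdd (ν+1) (by omega) u hu
    have key : ∀ x y, ‖fderiv ℂ (g ν y) u - fderiv ℂ (g ν x) u‖ ≤ C / δ * |y - x| := by
      intro x y
      rw [← fderiv_sub (hda ν (by omega) y u hu) (hda ν (by omega) x u hu)]
      have := sa_cauchy (f := fun v => g ν y v - g ν x v) (C := C * |y - x|) hδ
        (((h.diff ν (by omega) y).sub (h.diff ν (by omega) x)).mono hs)
        (fun v hv => sa_lip_real (fun t => h.der ν (by omega) t v (hs hv)) (fun t => hC t v hv) x y)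
      refine this.trans (le_of_eq (by ring))
    have hC0 : 0 ≤ C / δ := by
      have := (norm_nonneg _).trans (hC 0 u (mem_ball_self hδ)); positivity
    refine LipschitzWith.continuous (K := ⟨C/δ, hC0⟩) (LipschitzWith.of_dist_le_mul fun x y => ?_)
    rw [dist_eq_norm, Real.dist_eq]
    exact key y x
  · intro ν hν u hu
    obtain ⟨δ, C, hδ, hs, hC⟩ := h.bdd ν (by omega) u hu
    refine ⟨δ/2, C/(δ/2), by positivity, (ball_subset_ball (by linarith)).trans hs, fun θ y hy => ?_⟩
    have hs' : ball y (δ/2) ⊆ ball u δ := ball_subset_ball' (by have := mem_ball.1 hy; linarith)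
    exact sa_cauchy (by positivity) ((h.diff ν (by omega) θ).mono (hs'.trans hs))
      (fun z hz => hC θ z (hs' hz))

theorem sa_hc_joint {m : ℕ} {g : ℕ → ℝ → E → Y} {U : Set E} 
    (h : SaHC m g U) {ν : ℕ} (hν : ν ≤ m) {θ : ℝ} {u : E} (hu : u ∈ U) :
    ContinuousAt (fun q : ℝ × E => g ν q.1 q.2) (θ, u) := by
  obtain ⟨δ, C, hδ, hs, hC⟩ := h.bdd ν hν u hu
  have hlip : ∀ t, ∀ x ∈ closedBall u (δ/2), ‖g ν t x - g ν t u‖ ≤ C / (δ/2) * ‖x - u‖ := by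
    intro t x hx
    have := sa_lip ((h.diff ν hν t).mono hs) (hC t) (by linarith : δ/2 < δ) hx (mem_closedBall_self (by linarith))
    rwa [show δ - δ/2 = δ/2 by ring] at this
  have h1 : Filter.Tendsto (fun q : ℝ × E => g ν q.1 q.2 - g ν q.1 u) (nhds (θ,u)) (nhds 0) := by
    refine squeeze_zero_norm' (a := fun q : ℝ × E => C / (δ/2) * ‖q.2 - u‖) ?_ ?_
    · have : ∀ᶠ q : ℝ × E in nhds (θ, u), q.2 ∈ closedBall u (δ/2) :=
        continuousAt_snd (closedBall_mem_nhds u (by positivity))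
      filter_upwards [this] with q hq using hlip q.1 q.2 hq
    · have : ContinuousAt (fun q : ℝ × E => C / (δ/2) * ‖q.2 - u‖) (θ,u) := by fun_prop
      simpa [ContinuousAt] using this
  have h2 : Filter.Tendsto (fun q : ℝ × E => g ν q.1 u) (nhds (θ,u)) (nhds (g ν θ u)) :=
    ((h.cont ν hν u hu).comp continuous_fst).continuousAt (x := ((θ, u) : ℝ × E))
  have := h1.add h2
  simpa [ContinuousAt] using this

theorem sa_hc_comp (m : ℕ) : ∀ {Y : Type us} [NormedAddCommGroup Y] [NormedSpace ℂ Y]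
    [CompleteSpace Y] {g : ℕ → ℝ → E → Y} {U : Set E} (hU : IsOpen U)
    (h : SaHC m g U) {c : ℝ → E} (hc : ContDiff ℝ m c) (hcU : ∀ τ, c τ ∈ U),
    ContDiff ℝ m (fun τ => g 0 τ (c τ)) := by
  induction m with
  | zero =>
    intro Y _ _ _ g U hU h c hc hcU
    simp only [Nat.cast_zero, contDiff_zero] at hc ⊢
    rw [continuous_iff_continuousAt]
    intro τ
    exact ContinuousAt.comp (f := fun τ => (τ, c τ)) (sa_hc_joint h le_rfl (hcU τ))
      (by fun_prop)
  | succ m ih =>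
    intro Y _ _ _ g U hU h c hc hcU
    have hf := sa_hc_fderiv hU h
    have hc1 := contDiff_succ_iff_deriv.1 (by exact_mod_cast hc : ContDiff ℝ ((m:WithTop ℕ∞)+1) c)
    have hcm : ContDiff ℝ m c := hc.of_le (by exact_mod_cast Nat.le_succ m)
    have hder : ∀ τ, HasDerivAt (fun τ => g 0 τ (c τ))
        (g 1 τ (c τ) + fderiv ℂ (g 0 τ) (c τ) (deriv c τ)) τ := by
      intro τ
      have hev : ∀ᶠ v : ℝ × E in nhds (τ, c τ), v.2 ∈ U :=
        continuousAt_snd (hU.mem_nhds (hcU τ))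
      have hs := hasStrictFDerivAt_uncurry_coprod (𝕜 := ℝ) (u := (τ, c τ)) (f := fun τ v => g 0 τ v)
        (f₁ := fun τ v => ContinuousLinearMap.toSpanSingleton ℝ (g 1 τ v))
        (f₂ := fun τ v => (fderiv ℂ (g 0 τ) v).restrictScalars ℝ)
        (by
          filter_upwards [hev] with v hv
          exact (h.der 0 (by omega) v.1 v.2 hv).hasFDerivAt)
        (by
          filter_upwards [hev] with v hv
          exact ((h.diff 0 (by omega) v.1).differentiableAt (hU.mem_nhds hv)).hasFDerivAt.restrictScalars ℝ)
        (by
          have := sa_hc_joint h (ν := 1) (by omega) (θ := τ) (hcU τ)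
          exact (ContinuousLinearMap.toSpanSingletonCLE (𝕜 := ℝ) (E := Y)).continuous.continuousAt.comp this)
        (by
          have := sa_hc_joint hf (ν := 0) (by omega) (θ := τ) (hcU τ)
          exact (ContinuousLinearMap.restrictScalarsL ℂ E Y ℝ ℝ).continuous.continuousAt.comp this)
      have hcd : HasDerivAt (fun τ => (τ, c τ)) ((1:ℝ), deriv c τ) τ :=
        (hasDerivAt_id τ).prodMk (hc1.1 τ).hasDerivAt
      have := hs.hasFDerivAt.comp_hasDerivAt (f := fun τ => (τ, c τ)) τ hcd
      have e : ((ContinuousLinearMap.toSpanSingleton ℝ (g 1 τ (c τ))).coprod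
          ((fderiv ℂ (g 0 τ) (c τ)).restrictScalars ℝ)) ((1:ℝ), deriv c τ) =
          g 1 τ (c τ) + fderiv ℂ (g 0 τ) (c τ) (deriv c τ) := by
        simp
      rw [← e]
      exact this
    have hshift : SaHC m (fun ν => g (ν+1)) U :=
      ⟨fun ν hν => h.der (ν+1) (by omega), fun ν hν => h.cont (ν+1) (by omega),
        fun ν hν => h.diff (ν+1) (by omega), fun ν hν => h.bdd (ν+1) (by omega)⟩
    have hA := ih hU hshift hcm hcU
    have hB := ih hU hf hcm hcU
    have hBB : ContDiff ℝ m (fun τ => fderiv ℂ (g 0 τ) (c τ) (deriv c τ)) := by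
      have h1 : ContDiff ℝ m (fun q : (E →L[ℂ] Y) × E => q.1 q.2) :=
        (isBoundedBilinearMap_apply (𝕜 := ℂ) (E := E) (F := Y)).contDiff.restrict_scalars ℝ
      exact h1.comp (hB.prodMk hc1.2.2)
    have : ContDiff ℝ ((m:WithTop ℕ∞)+1) (fun τ => g 0 τ (c τ)) := by
      rw [contDiff_succ_iff_deriv]
      refine ⟨fun τ => (hder τ).differentiableAt, by simp, ?_⟩
      rw [show deriv (fun τ => g 0 τ (c τ)) = fun τ => g 1 τ (c τ) + fderiv ℂ (g 0 τ) (c τ) (deriv c τ)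
        from funext fun τ => (hder τ).deriv]
      exact hA.add hBB
    exact_mod_cast this

theorem sa_hc_iter {m : ℕ} {g : ℕ → ℝ → E → Y} {U : Set E} 
    (h : SaHC m g U) {u : E} (hu : u ∈ U) : ∀ ν ≤ m, iteratedDeriv ν (fun τ => g 0 τ u) = fun θ => g ν θ u := by
  intro ν
  induction ν with
  | zero => intro _; simp
  | succ ν ih =>
    intro hν
    rw [iteratedDeriv_succ, ih (by omega)]
    exact funext fun θ => (h.der ν (by omega) θ u hu).deriv

theorem sa_hc_contDiff {m : ℕ} {g : ℕ → ℝ → E → Y} {U : Set E} 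
    (h : SaHC m g U) {u : E} (hu : u ∈ U) : ContDiff ℝ m (fun τ => g 0 τ u) := by
  have : ContDiff ℝ ((m:ℕ∞):WithTop ℕ∞) (fun τ => g 0 τ u) := by
    rw [contDiff_iff_iteratedDeriv]
    constructor
    · intro k hk
      have hk' : k ≤ m := by exact_mod_cast hk
      rw [sa_hc_iter h hu k hk']; exact h.cont k hk' u hu
    · intro k hk
      have hk' : k < m := by exact_mod_cast hk
      rw [sa_hc_iter h hu k hk'.le]; exact fun θ => (h.der k hk' θ u hu).differentiableAt
  exact_mod_cast this

theorem sa_hc_mk {m : ℕ} {φ : ℝ → E → Y} {U : Set E} (hU : IsOpen U)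
    (hcd : ∀ u ∈ U, ContDiff ℝ m (fun τ => φ τ u))
    (hd : ∀ ν ≤ m, ∀ θ, DifferentiableOn ℂ (fun u => iteratedDeriv ν (fun τ => φ τ u) θ) U)
    (C : ℕ → ℝ)
    (hb : ∀ ν ≤ m, ∀ θ, ∀ u ∈ U, ‖iteratedDeriv ν (fun τ => φ τ u) θ‖ ≤ C ν) :
    SaHC m (fun ν θ u => iteratedDeriv ν (fun τ => φ τ u) θ) U := by
  refine ⟨?_, ?_, hd, ?_⟩
  · intro ν hν θ u hu
    simp only [iteratedDeriv_succ]
    exact (((hcd u hu).differentiable_iteratedDeriv ν (by exact_mod_cast hν)) θ).hasDerivAt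
  · intro ν hν u hu
    exact (hcd u hu).continuous_iteratedDeriv ν (by exact_mod_cast hν)
  · intro ν hν u hu
    obtain ⟨δ, hδ, hs⟩ := Metric.isOpen_iff.1 hU u hu
    exact ⟨δ, C ν, hδ, hs, fun θ y hy => hb ν hν θ y (hs hy)⟩

end ThetaClasses

set_option linter.unusedVariables false

section Jets

variable {Y : Type*} [NormedAddCommGroup Y] [NormedSpace ℂ Y]

/-- Taylor remainder estimate. -/
theorem sa_taylor_real (p : ℕ) : ∀ {a : ℝ → Y} (ha : ContDiff ℝ p a) {θ s ω : ℝ}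
    (hω : ∀ t, |t| ≤ |s| → ‖iteratedDeriv p a (θ + t) - iteratedDeriv p a θ‖ ≤ ω),
    ‖a (θ + s) - ∑ ν ∈ Finset.range (p+1), (s^ν / (ν.factorial : ℝ)) • iteratedDeriv ν a θ‖
      ≤ ω * |s|^p := by
  induction p with
  | zero =>
    intro a ha θ s ω hω
    simpa using hω s le_rfl
  | succ p ih =>
    intro a ha θ s ω hω
    have ha1 := contDiff_succ_iff_deriv.1 (by exact_mod_cast ha : ContDiff ℝ ((p:WithTop ℕ∞)+1) a)
    have hω0 : 0 ≤ ω := (norm_nonneg _).trans (hω 0 (by simp))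
    have hder : ∀ t, HasDerivAt (fun t => a (θ + t) - ∑ ν ∈ Finset.range (p+1+1),
        (t^ν / (ν.factorial : ℝ)) • iteratedDeriv ν a θ)
        (deriv a (θ + t) - ∑ ν ∈ Finset.range (p+1),
        (t^ν / (ν.factorial : ℝ)) • iteratedDeriv ν (deriv a) θ) t := by
      intro t
      have h1 : HasDerivAt (fun t => a (θ + t)) (deriv a (θ + t)) t := by
        exact HasDerivAt.comp_const_add θ t (ha1.1 (θ + t)).hasDerivAt
      refine h1.sub ?_
      simp only [Finset.sum_range_succ' _ (p+1)]
      simp only [pow_zero, Nat.factorial_zero, Nat.cast_one, div_one]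
      refine HasDerivAt.add_const _ ?_
      refine HasDerivAt.fun_sum fun ν _ => ?_
      rw [← iteratedDeriv_succ']
      have h2 : HasDerivAt (fun t : ℝ => t^(ν+1) / ((ν+1).factorial : ℝ)) (t^ν / (ν.factorial:ℝ)) t := by
        have := (hasDerivAt_pow (ν+1) t).div_const ((ν+1).factorial : ℝ)
        have e : (((ν+1 : ℕ):ℝ) * t^(ν+1-1) / ((ν+1).factorial : ℝ)) = t^ν / (ν.factorial:ℝ) := by
          rw [Nat.factorial_succ]; push_cast
          have : ((ν:ℝ)+1) ≠ 0 := by positivity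
          field_simp
        rwa [e] at this
      exact h2.smul_const _
    have hbd : ∀ t ∈ uIcc 0 s, ‖deriv a (θ + t) - ∑ ν ∈ Finset.range (p+1),
        (t^ν / (ν.factorial : ℝ)) • iteratedDeriv ν (deriv a) θ‖ ≤ ω * |s|^p := by
      intro t ht
      have hts : |t| ≤ |s| := by simpa using abs_sub_left_of_mem_uIcc ht
      refine (ih ha1.2.2 (θ := θ) (s := t) (ω := ω) fun t' ht' => ?_).trans (by gcongr)
      simp only [← iteratedDeriv_succ']
      exact hω t' (ht'.trans hts)
    have h3 := (convex_uIcc 0 s).norm_image_sub_le_of_norm_hasDerivWithin_le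
      (fun t _ => (hder t).hasDerivWithinAt) hbd left_mem_uIcc right_mem_uIcc
    have h0 : ∑ ν ∈ Finset.range (p+1+1), ((0:ℝ)^ν / (ν.factorial : ℝ)) • iteratedDeriv ν a θ = a θ := by
      rw [Finset.sum_range_succ']; simp
    rw [h0] at h3
    simp only [add_zero, sub_self, sub_zero, Real.norm_eq_abs] at h3
    rw [pow_succ, ← mul_assoc]
    exact h3

theorem sa_taylor_littleO {p : ℕ} {a : ℝ → Y} (ha : ContDiff ℝ p a) (θ : ℝ) :
    (fun s => a (θ + s) - ∑ ν ∈ Finset.range (p+1), (s^ν / (ν.factorial : ℝ)) • iteratedDeriv ν a θ)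
      =o[nhds 0] (fun s : ℝ => s^p) := by
  rw [Asymptotics.isLittleO_iff]
  intro c hc
  have hcont : Continuous (iteratedDeriv p a) := ha.continuous_iteratedDeriv p le_rfl
  obtain ⟨δ, hδ, h⟩ := Metric.continuousAt_iff.1 (hcont.continuousAt (x := θ)) c hc
  have : ∀ᶠ s : ℝ in nhds 0, s ∈ ball 0 δ := ball_mem_nhds 0 hδ
  filter_upwards [this] with s hs
  have hs' : |s| < δ := by simpa using hs
  rw [norm_pow, Real.norm_eq_abs]
  refine sa_taylor_real p ha fun t ht => ?_
  have := h (x := θ + t) (by simpa using ht.trans_lt hs')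
  rw [dist_eq_norm] at this
  exact this.le

theorem sa_poly_zero (N : ℕ) : ∀ {c : ℕ → Y}
    (h : (fun s : ℝ => ∑ ν ∈ Finset.range (N+1), s^ν • c ν) =o[nhdsWithin 0 {0}ᶜ] (fun s : ℝ => s^N)),
    ∀ ν ≤ N, c ν = 0 := by
  induction N with
  | zero =>
    intro c h ν hν
    obtain rfl : ν = 0 := by omega
    simp only [zero_add, Finset.sum_range_one, pow_zero, one_smul, Asymptotics.isLittleO_one_iff] at h
    exact tendsto_nhds_unique tendsto_const_nhds h
  | succ N ih =>
    intro c h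
    have h1 : Filter.Tendsto (fun s : ℝ => ∑ ν ∈ Finset.range (N+1+1), s^ν • c ν)
        (nhdsWithin 0 {0}ᶜ) (nhds 0) := by
      refine h.isBigO.trans_tendsto ?_
      have : ContinuousAt (fun s : ℝ => s^(N+1)) 0 := by fun_prop
      have h2 := this.tendsto.mono_left (nhdsWithin_le_nhds (s := {0}ᶜ))
      simpa using h2
    have h2 : Filter.Tendsto (fun s : ℝ => ∑ ν ∈ Finset.range (N+1+1), s^ν • c ν)
        (nhdsWithin 0 {0}ᶜ) (nhds (c 0)) := by
      have : ContinuousAt (fun s : ℝ => ∑ ν ∈ Finset.range (N+1+1), s^ν • c ν) 0 := by fun_prop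
      have h2 := this.tendsto.mono_left (nhdsWithin_le_nhds (s := {0}ᶜ))
      simpa [Finset.sum_range_succ'] using h2
    have hc0 : c 0 = 0 := tendsto_nhds_unique h2 h1
    have h3 : (fun s : ℝ => ∑ ν ∈ Finset.range (N+1), s^ν • c (ν+1)) =o[nhdsWithin 0 {0}ᶜ]
        (fun s : ℝ => s^N) := by
      rw [Asymptotics.isLittleO_iff] at h ⊢
      intro e he
      filter_upwards [h he, self_mem_nhdsWithin] with s hs hs0
      have hs0' : 0 < ‖s‖ := norm_pos_iff.2 hs0
      rw [Finset.sum_range_succ'] at hs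
      simp only [hc0, smul_zero, add_zero, pow_succ' s, mul_smul] at hs
      rw [← Finset.smul_sum, norm_smul, norm_mul] at hs
      have : ‖s‖ * ‖∑ ν ∈ Finset.range (N+1), s^ν • c (ν+1)‖ ≤ ‖s‖ * (e * ‖s^N‖) := by linarith
      exact le_of_mul_le_mul_left this hs0'
    intro ν hν
    rcases ν with _ | ν
    · exact hc0
    · exact ih h3 ν (by omega)

theorem sa_jet [CompleteSpace Y] {p : ℕ} {a : ℝ → Y} (ha : ContDiff ℝ p a) {θ : ℝ} {b : ℂ → Y}
    (hb : DifferentiableOn ℂ b (ball 0 1))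
    (hab : (fun s : ℝ => a (θ + s) - b s) =o[nhds 0] (fun s : ℝ => s^p)) :
    ∀ m ≤ p, iteratedDeriv m a θ = iteratedDeriv m b 0 := by
  obtain ⟨P, r, hP⟩ := hb.analyticAt (ball_mem_nhds 0 one_pos)
  have hPn : ∀ n, P n (fun _ => (1:ℂ)) = ((n.factorial : ℝ)⁻¹) • iteratedDeriv n b 0 := by
    intro n
    rw [iteratedDeriv_eq_iteratedFDeriv, ← hP.factorial_smul 1 n, ← Nat.cast_smul_eq_nsmul ℝ, smul_smul,
      inv_mul_cancel₀ (by positivity), one_smul]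
  have hB : (fun s : ℝ => b s - ∑ ν ∈ Finset.range (p+1), (s^ν / (ν.factorial:ℝ)) • iteratedDeriv ν b 0)
      =o[nhds 0] (fun s : ℝ => s^p) := by
    have h1 := hP.hasFPowerSeriesAt.isBigO_sub_partialSum_pow (p+1)
    have h2 : Filter.Tendsto (fun s : ℝ => (s:ℂ)) (nhds 0) (nhds 0) := by
      have : ContinuousAt (fun s : ℝ => (s:ℂ)) 0 := by fun_prop
      simpa [ContinuousAt] using this
    have h3 := h1.comp_tendsto h2
    have h4 : (fun s : ℝ => b s - ∑ ν ∈ Finset.range (p+1), (s^ν / (ν.factorial:ℝ)) • iteratedDeriv ν b 0)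
       =O[nhds 0] (fun s : ℝ => s^(p+1)) := by
      refine Asymptotics.IsBigO.congr' (h3.trans ?_) ?_ (Filter.EventuallyEq.rfl)
      · exact Asymptotics.IsBigO.of_bound 1 (Filter.Eventually.of_forall fun s => by simp)
      · refine Filter.Eventually.of_forall fun s => ?_
        simp only [Function.comp, zero_add, FormalMultilinearSeries.partialSum]
        congr 1
        refine Finset.sum_congr rfl fun ν _ => ?_
        have := (P ν).map_smul_univ (fun _ => (s:ℂ)) (fun _ => (1:ℂ))
        simp only [smul_eq_mul, mul_one, Finset.prod_const, Finset.card_univ, Fintype.card_fin] at this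
        rw [this, hPn, ← Complex.ofReal_pow, Complex.coe_smul, smul_smul, div_eq_mul_inv]
    refine h4.trans_isLittleO ?_
    exact Asymptotics.isLittleO_pow_pow (by omega)
  have hA := sa_taylor_littleO ha θ
  have h5 : (fun s : ℝ => ∑ ν ∈ Finset.range (p+1), s^ν •
      ((ν.factorial:ℝ)⁻¹ • (iteratedDeriv ν a θ - iteratedDeriv ν b 0))) =o[nhds 0] (fun s : ℝ => s^p) := by
    refine ((hab.add hB).sub hA).congr_left fun s => ?_
    simp only [smul_smul, smul_sub, Finset.sum_sub_distrib, div_eq_mul_inv]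
    abel
  intro m hm
  have h6 := sa_poly_zero p (h5.mono nhdsWithin_le_nhds) m hm
  have h7 : ((m.factorial:ℝ)⁻¹) ≠ 0 := by positivity
  exact sub_eq_zero.1 ((smul_eq_zero.1 h6).resolve_left h7)

end Jets

section HoloParam

variable {E Y : Type*} [NormedAddCommGroup E] [NormedSpace ℂ E]
  [NormedAddCommGroup Y] [NormedSpace ℂ Y]

theorem sa_param_slice {H : ℂ × E → Y} {U : Set E} (hU : IsOpen U)
    (hH : DifferentiableOn ℂ H (ball 0 1 ×ˢ U)) {s : ℂ} {u : E} (hs : s ∈ ball (0:ℂ) 1) (hu : u ∈ U) :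
    HasDerivAt (fun z => H (z, u)) (fderiv ℂ H (s, u) (1, 0)) s := by
  have h1 : HasDerivAt (fun z : ℂ => (z, u)) ((1:ℂ), (0:E)) s :=
    (hasDerivAt_id s).prodMk (hasDerivAt_const s u)
  exact (hH.differentiableAt ((isOpen_ball.prod hU).mem_nhds ⟨hs, hu⟩)).hasFDerivAt.comp_hasDerivAt
    (f := fun z : ℂ => (z, u)) s h1

theorem sa_param_slice2 {H : ℂ × E → Y} {U : Set E} (hU : IsOpen U)
    (hH : DifferentiableOn ℂ H (ball 0 1 ×ˢ U)) {s : ℂ} {u : E} (hs : s ∈ ball (0:ℂ) 1) (hu : u ∈ U) :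
    HasFDerivAt (fun v => H (s, v)) ((fderiv ℂ H (s, u)).comp (ContinuousLinearMap.inr ℂ ℂ E)) u := by
  have h1 : HasFDerivAt (fun v : E => (s, v)) (ContinuousLinearMap.inr ℂ ℂ E) u :=
    hasFDerivAt_prodMk_right s u
  exact (hH.differentiableAt ((isOpen_ball.prod hU).mem_nhds ⟨hs, hu⟩)).hasFDerivAt.comp u h1

theorem sa_param_iter [CompleteSpace Y] {H : ℂ × E → Y} {U : Set E} (hU : IsOpen U)
    (hH : DifferentiableOn ℂ H (ball 0 1 ×ˢ U)) (m : ℕ) :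
    DifferentiableOn ℂ (fun q : ℂ × E => iteratedDeriv m (fun z => H (z, q.2)) q.1) (ball 0 1 ×ˢ U) := by
  have ho := (isOpen_ball (x := (0:ℂ)) (ε := 1)).prod hU
  induction m with
  | zero => simpa using hH
  | succ m ih =>
    have h1 : DifferentiableOn ℂ (fun q : ℂ × E => fderiv ℂ
        (fun q : ℂ × E => iteratedDeriv m (fun z => H (z, q.2)) q.1) q (1,0)) (ball 0 1 ×ˢ U) := 
      fun q hq => ((sa_fderiv_diff ho ih) q hq).clm_apply (differentiableWithinAt_const _)
    refine h1.congr fun q hq => ?_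
    rw [iteratedDeriv_succ]
    exact (sa_param_slice hU ih hq.1 hq.2).deriv

theorem sa_iter_le [CompleteSpace Y] {b : ℂ → Y} (hb : DifferentiableOn ℂ b (ball 0 1)) {C : ℝ}
    (hC : ∀ z ∈ ball (0:ℂ) 1, ‖b z‖ ≤ C) (m : ℕ) : ‖iteratedDeriv m b 0‖ ≤ m.factorial * C := by
  have key : ∀ r ∈ Ioo (0:ℝ) 1, ‖iteratedDeriv m b 0‖ ≤ m.factorial * C / r^m := by
    intro r hr
    have hsub : closedBall (0:ℂ) r ⊆ ball 0 1 := closedBall_subset_ball hr.2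
    exact Complex.norm_iteratedDeriv_le_of_forall_mem_sphere_norm_le m hr.1
      (hb.diffContOnCl_ball hsub) (fun z hz => hC z (hsub (sphere_subset_closedBall hz)))
  have ht : Filter.Tendsto (fun r : ℝ => m.factorial * C / r^m) (nhdsWithin 1 (Iio 1))
      (nhds (m.factorial * C)) := by
    have : ContinuousAt (fun r : ℝ => m.factorial * C / r^m) 1 := by
      apply ContinuousAt.div (by fun_prop) (by fun_prop); simp
    have h := this.tendsto.mono_left (nhdsWithin_le_nhds (s := Iio 1))
    simpa using h
  refine ge_of_tendsto ht ?_
  filter_upwards [Ioo_mem_nhdsLT (zero_lt_one (α := ℝ))] with r hr using key r hr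

end HoloParam

section Inverse

variable {E : Type*} [NormedAddCommGroup E] [NormedSpace ℂ E] [CompleteSpace E]

theorem sa_inv {φ : E → E} {U V : Set E} {a : ℝ} (ha : 0 < a)
    (hφ : DifferentiableOn ℂ φ U) (hn : ∀ u ∈ U, ‖φ u - u‖ ≤ a)
    (hV : ∀ x ∈ V, ball x (5*a) ⊆ U) :
    ∃ Ψ : E → E, DifferentiableOn ℂ Ψ V ∧ (∀ u ∈ V, φ (Ψ u) = u) ∧ (∀ u ∈ V, Ψ (φ u) = u) := by
  set W : Set E := {v | ball v (4*a) ⊆ U} with hW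
  set g : E → E := fun u => φ u - u with hg
  have hgd : DifferentiableOn ℂ g U := hφ.sub differentiableOn_id
  have hlip : ∀ v ∈ W, ∀ x ∈ closedBall v (2*a), ∀ y ∈ closedBall v (2*a),
      ‖g x - g y‖ ≤ 1/2 * ‖x - y‖ := by
    intro v hv x hx y hy
    have := sa_lip (hgd.mono hv) (C := a) (fun z hz => hn z (hv hz)) (by linarith : 2*a < 4*a) hx hy
    rwa [show a / (4*a - 2*a) = 1/2 by field_simp; norm_num] at this
  have hex : ∀ v, ∃ u, v ∈ W → (u ∈ closedBall v a ∧ φ u = v) := by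
    intro v
    by_cases hv : v ∈ W
    swap
    · exact ⟨v, fun h => absurd h hv⟩
    have hm : MapsTo (fun u => v - g u) (closedBall v a) (closedBall v a) := by
      intro u hu
      have hu' : u ∈ U := hv (closedBall_subset_ball (by linarith) hu)
      rw [mem_closedBall_iff_norm]
      simpa using hn u hu'
    have hc : ContractingWith (1/2) (hm.restrict (fun u => v - g u) _ _) := by
      refine ⟨by rw [← NNReal.coe_lt_coe]; norm_num, LipschitzWith.of_dist_le_mul fun x y => ?_⟩
      rw [Subtype.dist_eq, Subtype.dist_eq, dist_eq_norm, dist_eq_norm]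
      have hsub := closedBall_subset_closedBall (x := v) (by linarith : a ≤ 2*a)
      have := hlip v hv x (hsub x.2) y (hsub y.2)
      calc _ = ‖g x - g y‖ := by
            simp only [MapsTo.val_restrict_apply]
            rw [← norm_neg]; congr 1; abel
        _ ≤ _ := by simpa using this
    obtain ⟨u, hu, hfix, -⟩ := hc.exists_fixedPoint' isClosed_closedBall.isComplete hm
      (mem_closedBall_self ha.le) (edist_ne_top _ _)
    refine ⟨u, fun _ => ⟨hu, ?_⟩⟩
    have h1 : v - (φ u - u) = u := hfix
    have h2 : v - (φ u - u) + (φ u - u) = u + (φ u - u) := by rw [h1]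
    simpa using h2.symm
  choose Ψ hΨ using hex
  have huniq : ∀ v ∈ W, ∀ x ∈ closedBall v (2*a), ∀ y ∈ closedBall v (2*a),
      ‖x - y‖ ≤ 2 * ‖φ x - φ y‖ := by
    intro v hv x hx y hy
    have h1 := hlip v hv x hx y hy
    have h2 : x - y = (φ x - φ y) - (g x - g y) := by simp only [hg]; abel
    have h3 : ‖x - y‖ ≤ ‖φ x - φ y‖ + ‖g x - g y‖ := by
      calc ‖x - y‖ = ‖(φ x - φ y) - (g x - g y)‖ := by rw [← h2]
        _ ≤ _ := norm_sub_le _ _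
    linarith
  have hVW : ∀ x ∈ V, ∀ y ∈ closedBall x a, y ∈ W := by
    intro x hx y hy
    exact (ball_subset_ball' (by have := mem_closedBall.1 hy; linarith)).trans (hV x hx)
  have hVW' : V ⊆ W := fun x hx => hVW x hx x (mem_closedBall_self ha.le)
  refine ⟨Ψ, ?_, fun u hu => (hΨ u (hVW' hu)).2, ?_⟩
  · intro v hv
    apply DifferentiableAt.differentiableWithinAt
    have hvW := hVW' hv
    obtain ⟨hΨv, hφv⟩ := hΨ v hvW
    have hsub := closedBall_subset_closedBall (x := v) (by linarith : a ≤ 2*a)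
    have hev : ∀ᶠ y in nhds v, y ∈ closedBall v a := closedBall_mem_nhds v ha
    have hcont : ContinuousAt Ψ v := by
      rw [ContinuousAt, tendsto_iff_norm_sub_tendsto_zero]
      refine squeeze_zero' (g := fun y => 2 * ‖y - v‖) (Filter.Eventually.of_forall fun y => norm_nonneg _) ?_ ?_
      · filter_upwards [hev] with y hy
        obtain ⟨h1, h2⟩ := hΨ y (hVW v hv y hy)
        have h3 : Ψ y ∈ closedBall v (2*a) := by
          rw [mem_closedBall] at *
          linarith [dist_triangle (Ψ y) y v]
        have := huniq v hvW _ h3 _ (hsub hΨv)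
        rwa [h2, hφv] at this
      · have : ContinuousAt (fun y => 2 * ‖y - v‖) v := by fun_prop
        simpa [ContinuousAt] using this
    have hU4 : Ψ v ∈ ball v (4*a) := closedBall_subset_ball (by linarith) hΨv
    have hφd : DifferentiableAt ℂ φ (Ψ v) := (hφ.mono hvW).differentiableAt (isOpen_ball.mem_nhds hU4)
    have hD : ‖1 - fderiv ℂ φ (Ψ v)‖ < 1 := by
      have h1 := sa_cauchy_bound_on (hgd.mono hvW) (C := a) (fun z hz => hn z (hvW hz))
        (by linarith : 2*a < 4*a) (hsub hΨv)
      rw [show a / (4*a - 2*a) = 1/2 by field_simp; norm_num] at h1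
      have h2 : fderiv ℂ g (Ψ v) = fderiv ℂ φ (Ψ v) - 1 := by
        have := fderiv_sub hφd (differentiableAt_id (𝕜 := ℂ) (x := Ψ v))
        rw [fderiv_id] at this
        exact this
      rw [h2, ← norm_neg, neg_sub] at h1
      linarith
    have hunit : IsUnit (fderiv ℂ φ (Ψ v)) := by
      have := isUnit_one_sub_of_norm_lt_one hD
      rwa [sub_sub_cancel] at this
    obtain ⟨w, hw⟩ := hunit
    let L : E ≃L[ℂ] E := ContinuousLinearEquiv.unitsEquiv ℂ E w
    have hL : HasFDerivAt φ (L : E →L[ℂ] E) (Ψ v) := by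
      have e : (L : E →L[ℂ] E) = fderiv ℂ φ (Ψ v) := by
        rw [← hw]; ext; simp [L]
      rw [e]; exact hφd.hasFDerivAt
    refine (HasFDerivAt.of_local_left_inverse hcont hL ?_).differentiableAt
    filter_upwards [hev] with y hy using (hΨ y (hVW v hv y hy)).2
  · intro u hu
    have huU : u ∈ U := hV u hu (mem_ball_self (by linarith))
    have h0 := hn u huU
    have hW' : φ u ∈ W := hVW u hu _ (by rwa [mem_closedBall_iff_norm])
    obtain ⟨h1, h2⟩ := hΨ _ hW'
    have h3 := huniq _ hW' _ (closedBall_subset_closedBall (by linarith) h1) u (by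
      rw [mem_closedBall_iff_norm, ← norm_neg, neg_sub]; linarith)
    rw [h2] at h3
    simpa [sub_eq_zero] using h3

end Inverse

section Step

set_option linter.unusedVariables false
set_option linter.unusedSectionVars false

variable {E : Type us} [NormedAddCommGroup E] [NormedSpace ℂ E]

/-- Assumptions on the vector field. -/
structure SaF (f : ℝ → E → E) (p : ℕ) (M : ℝ) (U : Set E) : Prop where
  hc : SaHC p (fun ν θ u => iteratedDeriv ν (fun τ => f τ u) θ) U
  per : ∀ u, Function.Periodic (fun θ => f θ u) 1
  bd : ∀ ν ≤ p, ∀ θ, ∀ u ∈ U, 3^ν / (ν.factorial : ℝ) * ‖iteratedDeriv ν (fun τ => f τ u) θ‖ ≤ M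

/-- Induction hypothesis on the change of variables. -/
structure SaP (Φ : ℝ → E → E) (p : ℕ) (ε M r : ℝ) (U : Set E) : Prop where
  hc : SaHC (p+1) (fun ν θ u => iteratedDeriv ν (fun τ => Φ τ u) θ) U
  per : ∀ u ∈ U, ∀ θ, Φ (θ + 1) u = Φ θ u
  near : ∀ θ, ∀ u ∈ U, ‖Φ θ u - u‖ ≤ r / 5
  ext : ∀ θ₀ : ℝ, ∃ Φt : ℂ × E → E, DifferentiableOn ℂ Φt (ball 0 1 ×ˢ U) ∧
    (∀ s ∈ ball (0:ℂ) 1, ∀ u ∈ U, ‖Φt (s, u) - u‖ ≤ 4 / 5 * r) ∧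
    ∃ C : ℝ, 0 ≤ C ∧ ∀ s : ℝ, |s| < 1 → ∀ u ∈ U, ‖Φ (θ₀ + s) u - Φt (s, u)‖ ≤ C * |s|^(p+1)
  bd : ∀ ν, 1 ≤ ν → ν ≤ p + 1 → ∀ θ, ∀ u ∈ U,
    ‖iteratedDeriv ν (fun τ => Φ τ u) θ‖ ≤ 8 * ε * M * (ν.factorial : ℝ)

/-- The integrand of the iteration. -/
noncomputable def saG (f Φ : ℝ → E → E) (τ : ℝ) (u : E) : E :=
  f τ (Φ τ u) - fderiv ℂ (Φ τ) u (aveField f Φ u)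

variable {f Φ : ℝ → E → E} {p : ℕ} {ε M r : ℝ} {U V : Set E}

theorem SaF.le (hf : SaF f p M U) {θ : ℝ} {u : E} (hu : u ∈ U) : ‖f θ u‖ ≤ M := by
  simpa using hf.bd 0 (by omega) θ u hu

theorem SaF.diff (hf : SaF f p M U) (θ : ℝ) : DifferentiableOn ℂ (f θ) U := by
  simpa using hf.hc.diff 0 (by omega) θ

theorem SaP.diff (hP : SaP Φ p ε M r U) (θ : ℝ) : DifferentiableOn ℂ (Φ θ) U := by
  simpa using hP.hc.diff 0 (by omega) θ

theorem SaP.contDiff (hP : SaP Φ p ε M r U) {u : E} (hu : u ∈ U) :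
    ContDiff ℝ (p+1 : ℕ) (fun θ => Φ θ u) := by
  simpa using sa_hc_contDiff hP.hc hu

theorem SaP.mem (hP : SaP Φ p ε M r U) (hr : 0 < r) (hVU : ∀ x ∈ V, ball x r ⊆ U) {u : E} (hu : u ∈ V) (θ : ℝ) :
    Φ θ u ∈ U := by
  have huU : u ∈ U := hVU u hu (mem_ball_self hr)
  apply hVU u hu
  rw [mem_ball_iff_norm]
  linarith [hP.near θ u huU]

/-- derivative close to the identity -/
theorem sa_fderiv_near {φ : E → E} (hφ : DifferentiableOn ℂ φ U) (hr : 0 < r) {a : ℝ}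
    (hn : ∀ u ∈ U, ‖φ u - u‖ ≤ a * r) (hVU : ∀ x ∈ V, ball x r ⊆ U) {u : E} (hu : u ∈ V) :
    ‖fderiv ℂ φ u - 1‖ ≤ a := by
  have hs := hVU u hu
  have hd : DifferentiableAt ℂ φ u := (hφ.mono hs).differentiableAt (ball_mem_nhds u hr)
  have h2 : fderiv ℂ (fun v => φ v - v) u = fderiv ℂ φ u - 1 := by
    have := fderiv_sub hd (differentiableAt_id (𝕜 := ℂ) (x := u))
    rw [fderiv_id] at this
    exact this
  rw [← h2]
  have := sa_cauchy (f := fun v => φ v - v) hr ((hφ.mono hs).sub differentiableOn_id)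
    (fun z hz => hn z (hs hz))
  rwa [mul_div_assoc, div_self hr.ne', mul_one] at this

theorem sa_near_apply {D : E →L[ℂ] E} {a : ℝ} (hD : ‖D - 1‖ ≤ a) (x : E) : ‖D x‖ ≤ (1 + a) * ‖x‖ := by
  have h1 : D x = x + (D - 1) x := by simp
  rw [h1]
  have := (D - 1).le_opNorm x
  calc _ ≤ ‖x‖ + ‖(D-1) x‖ := norm_add_le _ _
    _ ≤ ‖x‖ + a * ‖x‖ := by gcongr; exact this.trans (by gcongr)
    _ = _ := by ring

theorem sa_near_equiv [CompleteSpace E] {D : E →L[ℂ] E} (hD : ‖D - 1‖ ≤ 1/5) : ∃ L : E ≃L[ℂ] E, (L : E →L[ℂ] E) = D := by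
  have h1 : ‖1 - D‖ < 1 := by rw [← norm_neg, neg_sub]; linarith
  have := isUnit_one_sub_of_norm_lt_one h1
  rw [sub_sub_cancel] at this
  obtain ⟨w, hw⟩ := this
  exact ⟨ContinuousLinearEquiv.unitsEquiv ℂ E w, by rw [← hw]; ext; simp⟩

theorem sa_near_inverse [CompleteSpace E] {D : E →L[ℂ] E} (hD : ‖D - 1‖ ≤ 1/5) (x : E) :
    D (D.inverse x) = x ∧ ‖D.inverse x‖ ≤ 5/4 * ‖x‖ := by
  obtain ⟨L, rfl⟩ := sa_near_equiv hD
  have h1 : (L : E →L[ℂ] E) ((L : E →L[ℂ] E).inverse x) = x := by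
    rw [ContinuousLinearMap.inverse_equiv]; simp
  refine ⟨h1, ?_⟩
  set y := (L : E →L[ℂ] E).inverse x
  have h2 : y = x - ((L : E →L[ℂ] E) - 1) y := by
    rw [_root_.sub_apply, h1]; simp
  have h3 : ‖y‖ ≤ ‖x‖ + ‖((L : E →L[ℂ] E) - 1) y‖ := by
    conv_lhs => rw [h2]
    exact norm_sub_le _ _
  have h4 := ((L : E →L[ℂ] E) - 1).le_opNorm y
  have h5 : ‖(L : E →L[ℂ] E) - 1‖ * ‖y‖ ≤ 1/5 * ‖y‖ := by gcongr
  linarith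

theorem SaP.avg [CompleteSpace E] (hP : SaP Φ p ε M r U) (hU : IsOpen U) {u : E} (hu : u ∈ U) :
    DifferentiableAt ℂ (thAvg Φ) u ∧ ∀ w,
      IntervalIntegrable (fun t => fderiv ℂ (Φ t) u w) MeasureTheory.volume 0 1 ∧
      fderiv ℂ (thAvg Φ) u w = ∫ t in (0:ℝ)..1, fderiv ℂ (Φ t) u w := by
  obtain ⟨L, hL, h⟩ := sa_intDiff (U := U ∩ ball u 1) (a := 0) (b := 1) (h := Φ)
    (C := r/5 + (1 + ‖u‖)) (hU.inter isOpen_ball)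
    (fun t _ => (hP.diff t).mono inter_subset_left)
    (fun v hv => (hP.contDiff hv.1).continuous.continuousOn)
    (fun t _ v hv => by
      have h1 := hP.near t v hv.1
      have h2 : ‖v - u‖ < 1 := by rw [← mem_ball_iff_norm]; exact hv.2
      calc ‖Φ t v‖ = ‖(Φ t v - v) + ((v - u) + u)‖ := by congr 1; abel
        _ ≤ ‖Φ t v - v‖ + (‖v - u‖ + ‖u‖) := (norm_add_le _ _).trans (by gcongr; exact norm_add_le _ _)
        _ ≤ _ := by gcongr) (u := u) ⟨hu, mem_ball_self one_pos⟩
  have hL' : HasFDerivAt (thAvg Φ) L u := hL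
  exact ⟨hL'.differentiableAt, fun w => ⟨(h w).1, by rw [hL'.fderiv]; exact (h w).2⟩⟩

theorem SaP.avg_near [CompleteSpace E] (hP : SaP Φ p ε M r U) {u : E} (hu : u ∈ U) :
    ‖thAvg Φ u - u‖ ≤ r / 5 := by
  have h1 : thAvg Φ u - u = ∫ t in (0:ℝ)..1, (Φ t u - u) := by
    rw [intervalIntegral.integral_sub]
    · simp [thAvg]
    · exact (hP.contDiff hu).continuous.intervalIntegrable _ _
    · exact intervalIntegrable_const
  rw [h1]
  have := intervalIntegral.norm_integral_le_of_norm_le_const (a := 0) (b := 1) (C := r/5)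
    (f := fun t => Φ t u - u) (fun t _ => hP.near t u hu)
  simpa using this

section
variable [CompleteSpace E] (hU : IsOpen U) (hV : IsOpen V) (hr : 0 < r)
  (hVU : ∀ x ∈ V, ball x r ⊆ U) (hM : 0 < M) (hf : SaF f p M U) (hP : SaP Φ p ε M r U)
include hU hV hr hVU hM hf hP

theorem sa_fPhi_contDiff {u : E} (hu : u ∈ V) : ContDiff ℝ p (fun θ => f θ (Φ θ u)) := by
  have huU : u ∈ U := hVU u hu (mem_ball_self hr)
  have := sa_hc_comp p hU hf.hc ((hP.contDiff huU).of_le (by exact_mod_cast Nat.le_succ p)) 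
    (hP.mem hr hVU hu)
  simpa using this

theorem sa_fPhi_diff (θ : ℝ) : DifferentiableOn ℂ (fun u => f θ (Φ θ u)) V := by
  have hsub : V ⊆ U := fun x hx => hVU x hx (mem_ball_self hr)
  exact (hf.diff θ).comp ((hP.diff θ).mono hsub) (fun u hu => hP.mem hr hVU hu θ)

theorem sa_dPhi_near {u : E} (hu : u ∈ V) (θ : ℝ) : ‖fderiv ℂ (Φ θ) u - 1‖ ≤ 1/5 :=
  sa_fderiv_near (hP.diff θ) hr (fun v hv => by linarith [hP.near θ v hv]) hVU hu

theorem sa_dAvg_near {u : E} (hu : u ∈ V) : ‖fderiv ℂ (thAvg Φ) u - 1‖ ≤ 1/5 :=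
  sa_fderiv_near (fun v hv => (hP.avg hU hv).1.differentiableWithinAt) hr
    (fun v hv => by linarith [hP.avg_near hv]) hVU hu

theorem sa_fAvg_diff {u : E} (hu : u ∈ V) : DifferentiableAt ℂ (thAvg fun θ v => f θ (Φ θ v)) u := by
  obtain ⟨L, hL, -⟩ := sa_intDiff (U := V) (a := 0) (b := 1) (h := fun θ v => f θ (Φ θ v))
    (C := M) hV (fun t _ => sa_fPhi_diff hU hV hr hVU hM hf hP t)
    (fun v hv => (sa_fPhi_contDiff hU hV hr hVU hM hf hP hv).continuous.continuousOn)
    (fun t _ v hv => hf.le (hP.mem hr hVU hv t)) hu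
  exact HasFDerivAt.differentiableAt (f := thAvg fun θ v => f θ (Φ θ v)) hL

theorem sa_F_diff : DifferentiableOn ℂ (aveField f Φ) V := by
  intro u hu
  apply DifferentiableAt.differentiableWithinAt
  have hsub : V ⊆ U := fun x hx => hVU x hx (mem_ball_self hr)
  have h1 : DifferentiableAt ℂ (fderiv ℂ (thAvg Φ)) u :=
    (sa_fderiv_diff hU (fun v hv => (hP.avg hU hv).1.differentiableWithinAt)).differentiableAt
      (hU.mem_nhds (hsub hu))
  obtain ⟨L, hL⟩ := sa_near_equiv (sa_dAvg_near hU hV hr hVU hM hf hP hu)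
  have h2 : DifferentiableAt ℂ (ContinuousLinearMap.inverse : (E →L[ℂ] E) → (E →L[ℂ] E))
      (fderiv ℂ (thAvg Φ) u) := by
    rw [← hL]
    exact (contDiffAt_map_inverse (𝕜 := ℂ) (n := 1) L).differentiableAt (by simp)
  have h3 : DifferentiableAt ℂ (fun v => (fderiv ℂ (thAvg Φ) v).inverse) u := h2.comp u h1
  exact h3.clm_apply (sa_fAvg_diff hU hV hr hVU hM hf hP hu)

theorem sa_F_spec {u : E} (hu : u ∈ V) : ‖aveField f Φ u‖ ≤ 5/4 * M ∧
    fderiv ℂ (thAvg Φ) u (aveField f Φ u) = thAvg (fun θ v => f θ (Φ θ v)) u := by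
  have h1 := sa_near_inverse (sa_dAvg_near hU hV hr hVU hM hf hP hu)
    (thAvg (fun θ v => f θ (Φ θ v)) u)
  refine ⟨h1.2.trans ?_, h1.1⟩
  gcongr
  have := intervalIntegral.norm_integral_le_of_norm_le_const (a := 0) (b := 1) (C := M)
    (f := fun t => f t (Φ t u)) (fun t _ => hf.le (hP.mem hr hVU hu t))
  simpa [thAvg] using this

theorem sa_G_contDiff {u : E} (hu : u ∈ V) : ContDiff ℝ p (fun θ => saG f Φ θ u) := by
  have huU : u ∈ U := hVU u hu (mem_ball_self hr)
  refine (sa_fPhi_contDiff hU hV hr hVU hM hf hP hu).sub ?_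
  have h1 : ContDiff ℝ p (fun θ => fderiv ℂ (Φ θ) u) := by
    simpa using sa_hc_contDiff (sa_hc_fderiv hU hP.hc) huU
  have h2 : ContDiff ℝ p (fun q : E →L[ℂ] E => q (aveField f Φ u)) :=
    ((ContinuousLinearMap.apply ℂ E (aveField f Φ u)).contDiff (n := p)).restrict_scalars ℝ
  exact h2.comp h1

theorem sa_G_diff (θ : ℝ) : DifferentiableOn ℂ (saG f Φ θ) V := by
  have hsub : V ⊆ U := fun x hx => hVU x hx (mem_ball_self hr)
  refine (sa_fPhi_diff hU hV hr hVU hM hf hP θ).sub ?_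
  intro u hu
  exact ((sa_fderiv_diff hU (hP.diff θ)).mono hsub u hu).clm_apply
    (sa_F_diff hU hV hr hVU hM hf hP u hu)

theorem sa_G_le {u : E} (hu : u ∈ V) (θ : ℝ) : ‖saG f Φ θ u‖ ≤ 5/2 * M := by
  have h1 : ‖f θ (Φ θ u)‖ ≤ M := hf.le (hP.mem hr hVU hu θ)
  have h2 := sa_near_apply (sa_dPhi_near hU hV hr hVU hM hf hP hu θ) (aveField f Φ u)
  have h3 := (sa_F_spec hU hV hr hVU hM hf hP hu).1
  have := norm_sub_le (f θ (Φ θ u)) (fderiv ℂ (Φ θ) u (aveField f Φ u))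
  unfold saG
  nlinarith

theorem sa_G_per {u : E} (hu : u ∈ V) : Function.Periodic (fun θ => saG f Φ θ u) 1 := by
  have huU : u ∈ U := hVU u hu (mem_ball_self hr)
  intro θ
  have h1 : Φ (θ+1) =ᶠ[nhds u] Φ θ := by
    filter_upwards [hU.mem_nhds huU] with v hv using hP.per v hv θ
  have h2 : f (θ+1) (Φ θ u) = f θ (Φ θ u) := hf.per (Φ θ u) θ
  simp only [saG, h1.fderiv_eq, h1.eq_of_nhds, h2]

theorem sa_G_mean {u : E} (hu : u ∈ V) : ∫ τ in (0:ℝ)..1, saG f Φ τ u = 0 := by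
  have huU : u ∈ U := hVU u hu (mem_ball_self hr)
  have h1 := (hP.avg hU huU).2 (aveField f Φ u)
  have h2 := (sa_F_spec hU hV hr hVU hM hf hP hu).2
  simp only [saG]
  rw [intervalIntegral.integral_sub _ h1.1, ← h1.2, h2]
  · simp [thAvg]
  · exact (sa_fPhi_contDiff hU hV hr hVU hM hf hP hu).continuous.intervalIntegrable _ _


theorem sa_G_int_per {u : E} (hu : u ∈ V) :
    Function.Periodic (fun θ => ∫ τ in (0:ℝ)..θ, saG f Φ τ u) 1 := by
  intro θ
  have hc : Continuous (fun τ => saG f Φ τ u) := (sa_G_contDiff hU hV hr hVU hM hf hP hu).continuous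
  have h1 := (sa_G_per hU hV hr hVU hM hf hP hu).intervalIntegral_add_eq θ 0
  rw [zero_add, sa_G_mean hU hV hr hVU hM hf hP hu] at h1
  have h2 := intervalIntegral.integral_add_adjacent_intervals (μ := MeasureTheory.volume)
    (hc.intervalIntegrable 0 θ) (hc.intervalIntegrable θ (θ+1))
  simp only
  rw [← h2, h1, add_zero]

theorem sa_G_int_le {u : E} (hu : u ∈ V) (θ : ℝ) : ‖∫ τ in (0:ℝ)..θ, saG f Φ τ u‖ ≤ 5/4 * M := by
  have h1 := (sa_G_int_per hU hV hr hVU hM hf hP hu).sub_int_mul_eq (round θ) (x := θ)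
  simp only [mul_one] at h1
  rw [← h1]
  have h2 := intervalIntegral.norm_integral_le_of_norm_le_const (a := 0) (b := θ - round θ) (C := 5/2 * M)
    (f := fun τ => saG f Φ τ u) (fun t _ => sa_G_le hU hV hr hVU hM hf hP hu t)
  rw [sub_zero] at h2
  have h3 := abs_sub_round θ
  nlinarith

theorem sa_G_int_diff (θ : ℝ) : DifferentiableOn ℂ (fun u => ∫ τ in (0:ℝ)..θ, saG f Φ τ u) V := by
  intro u hu
  obtain ⟨L, hL, -⟩ := sa_intDiff (U := V) (a := 0) (b := θ) (h := saG f Φ)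
    (C := 5/2 * M) hV (fun t _ => sa_G_diff hU hV hr hVU hM hf hP t)
    (fun v hv => (sa_G_contDiff hU hV hr hVU hM hf hP hv).continuous.continuousOn)
    (fun t _ v hv => sa_G_le hU hV hr hVU hM hf hP hv t) hu
  exact hL.differentiableAt.differentiableWithinAt

end
end Step

section Ext

set_option linter.unusedVariables false
set_option linter.unusedSectionVars false

variable {E : Type us} [NormedAddCommGroup E] [NormedSpace ℂ E]
variable {f Φ : ℝ → E → E} {p : ℕ} {ε M r : ℝ} {U V : Set E}

/-- Taylor polynomial in θ of the vector field, with complex argument. -/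
noncomputable def saFt (f : ℝ → E → E) (p : ℕ) (θ₀ : ℝ) (q : ℂ × E) : E :=
  ∑ ν ∈ Finset.range (p+1), (q.1^ν / (ν.factorial : ℂ)) • iteratedDeriv ν (fun τ => f τ q.2) θ₀

theorem sa_geom (n : ℕ) : ∑ ν ∈ Finset.range n, (1/3:ℝ)^ν ≤ 3/2 := by
  have : ∑ ν ∈ Finset.range n, (1/3:ℝ)^ν = 3/2 * (1 - (1/3)^n) := by
    induction n with
    | zero => simp
    | succ n ih => rw [Finset.sum_range_succ, ih]; ring
  rw [this]
  have : (0:ℝ) ≤ (1/3)^n := by positivity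
  linarith

theorem sa_ft_le (hM : 0 < M) (hf : SaF f p M U) (θ₀ : ℝ) {s : ℂ} (hs : s ∈ ball (0:ℂ) 1) {v : E}
    (hv : v ∈ U) : ‖saFt f p θ₀ (s, v)‖ ≤ 3/2 * M := by
  have hs1 : ‖s‖ ≤ 1 := by have := mem_ball_zero_iff.1 hs; linarith
  unfold saFt
  calc _ ≤ ∑ ν ∈ Finset.range (p+1), M * (1/3:ℝ)^ν := by
        refine norm_sum_le_of_le _ fun ν hν => ?_
        have hν' : ν ≤ p := by have := Finset.mem_range.1 hν; omega
        have h := hf.bd ν hν' θ₀ v hv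
        rw [norm_smul, norm_div, norm_pow, Complex.norm_natCast]
        have h1 : ‖s‖^ν ≤ 1 := pow_le_one₀ (norm_nonneg _) hs1
        have h3 : (0:ℝ) < 3^ν := by positivity
        calc _ ≤ 1 / (ν.factorial : ℝ) * ‖iteratedDeriv ν (fun τ => f τ v) θ₀‖ := by gcongr
          _ = (3^ν / (ν.factorial : ℝ) * ‖iteratedDeriv ν (fun τ => f τ v) θ₀‖) * (1/3)^ν := by
            rw [one_div_pow]; field_simp
          _ ≤ _ := by gcongr
    _ = M * ∑ ν ∈ Finset.range (p+1), (1/3:ℝ)^ν := by rw [Finset.mul_sum]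
    _ ≤ M * (3/2) := by gcongr; exact sa_geom _
    _ = _ := by ring

theorem sa_ft_diff (hf : SaF f p M U) (θ₀ : ℝ) : DifferentiableOn ℂ (saFt f p θ₀) (univ ×ˢ U) := by
  unfold saFt
  refine DifferentiableOn.fun_sum fun ν hν => ?_
  have hν' : ν ≤ p := by have := Finset.mem_range.1 hν; omega
  refine DifferentiableOn.smul (by fun_prop) ?_
  exact (hf.hc.diff ν hν' θ₀).comp differentiableOn_snd (fun q hq => hq.2)

theorem sa_ft_taylor (hf : SaF f p M U) {θ₀ s ω : ℝ} {v : E} (hv : v ∈ U)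
    (hω : ∀ t, |t| ≤ |s| → ‖iteratedDeriv p (fun τ => f τ v) (θ₀ + t) -
      iteratedDeriv p (fun τ => f τ v) θ₀‖ ≤ ω) :
    ‖f (θ₀ + s) v - saFt f p θ₀ (s, v)‖ ≤ ω * |s|^p := by
  have h0 : ContDiff ℝ p (fun τ => f τ v) := by simpa using sa_hc_contDiff hf.hc hv
  have := sa_taylor_real p h0 hω
  convert this using 3
  unfold saFt
  refine Finset.sum_congr rfl fun ν _ => ?_
  rw [← Complex.coe_smul]
  push_cast
  rfl

variable [CompleteSpace E] (hU : IsOpen U) (hV : IsOpen V) (hr : 0 < r)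
  (hVU : ∀ x ∈ V, ball x r ⊆ U) (hM : 0 < M) (hf : SaF f p M U) (hP : SaP Φ p ε M r U)
include hU hV hr hVU hM hf hP

theorem sa_Gt (θ₀ : ℝ) : ∃ Gt : ℂ × E → E, DifferentiableOn ℂ Gt (ball 0 1 ×ˢ V) ∧
    (∀ s ∈ ball (0:ℂ) 1, ∀ u ∈ V, ‖Gt (s, u)‖ ≤ 4 * M) ∧
    ∃ C : ℝ, 0 ≤ C ∧ ∀ s : ℝ, |s| < 1 → ∀ u ∈ V, ∀ ω : ℝ,
      (∀ t, |t| ≤ |s| → ‖iteratedDeriv p (fun τ => f τ (Φ (θ₀ + s) u)) (θ₀ + t) -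
        iteratedDeriv p (fun τ => f τ (Φ (θ₀ + s) u)) θ₀‖ ≤ ω) →
      ‖saG f Φ (θ₀ + s) u - Gt (s, u)‖ ≤ ω * |s|^p + C * |s|^(p+1) := by
  have hsub : V ⊆ U := fun x hx => hVU x hx (mem_ball_self hr)
  obtain ⟨Φt, hd, hn, C, hC0, hC⟩ := hP.ext θ₀
  have hcl : ∀ s ∈ ball (0:ℂ) 1, ∀ u ∈ V, Φt (s,u) ∈ closedBall u (4/5*r) := fun s hs u hu => by
    rw [mem_closedBall_iff_norm]; exact hn s hs u (hsub hu)
  have hlt : 4/5*r < r := by linarith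
  have hin : ∀ u ∈ V, closedBall u (4/5*r) ⊆ U := fun u hu =>
    (closedBall_subset_ball hlt).trans (hVU u hu)
  have ho := (isOpen_ball (x := (0:ℂ)) (ε := 1)).prod hU
  refine ⟨fun q => saFt f p θ₀ (q.1, Φt q) - fderiv ℂ Φt q (0, aveField f Φ q.2), ?_, ?_,
    (3/2*M)/(r - 4/5*r) * C + C / r * (5/4*M), ?_, ?_⟩
  · refine DifferentiableOn.sub ?_ ?_
    · refine (sa_ft_diff hf θ₀).comp (differentiableOn_fst.prodMk (hd.mono (prod_mono le_rfl hsub))) ?_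
      intro q hq
      exact ⟨mem_univ _, hin _ hq.2 (hcl q.1 hq.1 q.2 hq.2)⟩
    · intro q hq
      refine ((sa_fderiv_diff ho hd).mono (prod_mono le_rfl hsub) q hq).clm_apply ?_
      refine (differentiableWithinAt_const _).prodMk ?_
      exact (sa_F_diff hU hV hr hVU hM hf hP q.2 hq.2).comp q differentiableWithinAt_snd
        (fun q hq => hq.2)
  · intro s hs u hu
    have h1 := sa_ft_le hM hf θ₀ hs (hin u hu (hcl s hs u hu))
    have h2 := (sa_F_spec hU hV hr hVU hM hf hP hu).1
    have h3 := sa_param_slice2 hU hd hs (hsub hu)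
    have h4 : ‖fderiv ℂ (fun v => Φt (s, v)) u - 1‖ ≤ 4/5 :=
      sa_fderiv_near (U := U) (fun v hv => (sa_param_slice2 hU hd hs hv).differentiableAt.differentiableWithinAt)
        hr (fun v hv => hn s hs v hv) hVU hu
    rw [h3.fderiv] at h4
    have h5 := sa_near_apply h4 (aveField f Φ u)
    have h6 := norm_sub_le (saFt f p θ₀ (s, Φt (s,u))) (fderiv ℂ Φt (s,u) (0, aveField f Φ u))
    simp only [ContinuousLinearMap.comp_apply, ContinuousLinearMap.inr_apply] at h5
    simp only
    nlinarith
  · have : 0 < r - 4/5*r := by linarith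
    positivity
  · intro s hs u hu ω hω
    have hsC : (s:ℂ) ∈ ball (0:ℂ) 1 := by simpa using hs
    have hcU : Φ (θ₀ + s) u ∈ U := hP.mem hr hVU hu _
    have h1 := sa_ft_taylor hf hcU hω
    have h2 : ‖saFt f p θ₀ (s, Φ (θ₀+s) u) - saFt f p θ₀ (s, Φt (s,u))‖ ≤
        (3/2*M)/(r - 4/5*r) * ‖Φ (θ₀+s) u - Φt (s,u)‖ := by
      refine sa_lip (f := fun v => saFt f p θ₀ (s, v)) (u := u) (δ := r) (δ' := 4/5*r) ?_ ?_ hlt ?_ (hcl s hsC u hu)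
      · refine (sa_ft_diff hf θ₀).comp ((differentiableOn_const _).prodMk differentiableOn_id) ?_
        intro v hv
        exact ⟨mem_univ _, hVU u hu hv⟩
      · intro v hv
        exact sa_ft_le hM hf θ₀ hsC (hVU u hu hv)
      · rw [mem_closedBall_iff_norm]
        have := hP.near (θ₀+s) u (hsub hu)
        linarith
    have h3 := hC s hs u (hsub hu)
    have h4 := sa_param_slice2 hU hd hsC (hsub hu)
    have h5 : ‖fderiv ℂ (fun v => Φ (θ₀+s) v - Φt (s,v)) u‖ ≤ C * |s|^(p+1) / r := by
      refine sa_cauchy hr ?_ (fun v hv => hC s hs v (hVU u hu hv))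
      refine ((hP.diff _).sub ?_).mono (hVU u hu)
      exact (fun v hv => (sa_param_slice2 hU hd hsC hv).differentiableAt.differentiableWithinAt)
    have h6 : fderiv ℂ (fun v => Φ (θ₀+s) v - Φt (s,v)) u = fderiv ℂ (Φ (θ₀+s)) u -
        (fderiv ℂ Φt (s, u)).comp (ContinuousLinearMap.inr ℂ ℂ E) := by
      rw [← h4.fderiv]
      exact fderiv_sub ((hP.diff _).differentiableAt (hU.mem_nhds (hsub hu))) h4.differentiableAt
    rw [h6] at h5
    have h7 := ContinuousLinearMap.le_of_opNorm_le _ h5 (aveField f Φ u)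
    simp only [_root_.sub_apply, ContinuousLinearMap.comp_apply, ContinuousLinearMap.inr_apply] at h7
    have h8 := (sa_F_spec hU hV hr hVU hM hf hP hu).1
    have e : saG f Φ (θ₀ + s) u - (saFt f p θ₀ (s, Φt (s,u)) - fderiv ℂ Φt (s,u) (0, aveField f Φ u)) =
      (f (θ₀+s) (Φ (θ₀+s) u) - saFt f p θ₀ (s, Φ (θ₀+s) u)) +
      (saFt f p θ₀ (s, Φ (θ₀+s) u) - saFt f p θ₀ (s, Φt (s,u))) -
      (fderiv ℂ (Φ (θ₀+s)) u (aveField f Φ u) - fderiv ℂ Φt (s,u) (0, aveField f Φ u)) := by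
      unfold saG; abel
    have hpos : 0 < r - 4/5*r := by linarith
    simp only
    rw [e]
    refine (norm_sub_le _ _).trans ?_
    refine (add_le_add (norm_add_le _ _) le_rfl).trans ?_
    calc _ ≤ ω * |s|^p + (3/2*M)/(r - 4/5*r) * (C * |s|^(p+1)) + C * |s|^(p+1) / r * (5/4*M) := by
          gcongr
          · exact h2.trans (by gcongr)
          · exact h7.trans (by gcongr)
      _ = _ := by ring

theorem sa_Gt' (θ₀ : ℝ) : ∃ Gt : ℂ × E → E, DifferentiableOn ℂ Gt (ball 0 1 ×ˢ V) ∧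
    (∀ s ∈ ball (0:ℂ) 1, ∀ u ∈ V, ‖Gt (s, u)‖ ≤ 4 * M) ∧
    (∃ C : ℝ, 0 ≤ C ∧ ∀ s : ℝ, |s| < 1 → ∀ u ∈ V,
      ‖saG f Φ (θ₀ + s) u - Gt (s, u)‖ ≤ C * |s|^p) ∧
    ∀ u ∈ V, (fun s : ℝ => saG f Φ (θ₀ + s) u - Gt (s, u)) =o[nhds 0] (fun s : ℝ => s^p) := by
  have hsub : V ⊆ U := fun x hx => hVU x hx (mem_ball_self hr)
  obtain ⟨Gt, hd, hb, C, hC0, hC⟩ := sa_Gt hU hV hr hVU hM hf hP θ₀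
  refine ⟨Gt, hd, hb, ⟨2 * (M * p.factorial / 3^p) + C, by positivity, ?_⟩, ?_⟩
  · intro s hs u hu
    have hcU : Φ (θ₀ + s) u ∈ U := hP.mem hr hVU hu _
    have hD : ∀ θ, ‖iteratedDeriv p (fun τ => f τ (Φ (θ₀ + s) u)) θ‖ ≤ M * p.factorial / 3^p := by
      intro θ
      have := hf.bd p le_rfl θ _ hcU
      rw [le_div_iff₀ (by positivity)]
      rw [div_mul_eq_mul_div, div_le_iff₀ (by positivity)] at this
      linarith
    refine (hC s hs u hu (2 * (M * p.factorial / 3^p)) ?_).trans ?_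
    · intro t _
      refine (norm_sub_le _ _).trans ?_
      linarith [hD (θ₀ + t), hD θ₀]
    · rw [add_mul]
      gcongr ?_ + C * ?_
      · exact le_rfl
      · exact pow_le_pow_of_le_one (abs_nonneg _) hs.le (Nat.le_succ p)
  · intro u hu
    rw [Asymptotics.isLittleO_iff]
    intro c hc
    have hj := sa_hc_joint hf.hc le_rfl (θ := θ₀) (hP.mem hr hVU hu θ₀)
    obtain ⟨δ, hδ, h⟩ := Metric.continuousAt_iff.1 hj (c/4) (by positivity)
    have hΦ : ContinuousAt (fun s => Φ (θ₀ + s) u) 0 :=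
      ((hP.contDiff (hsub hu)).continuous.comp (continuous_const.add continuous_id)).continuousAt
    obtain ⟨δ2, hδ2, h2⟩ := Metric.continuousAt_iff.1 hΦ δ hδ
    have hev : ∀ᶠ s : ℝ in nhds 0, s ∈ ball 0 (min (min δ δ2) (min 1 (c/(2*(C+1))))) :=
      ball_mem_nhds 0 (by positivity)
    filter_upwards [hev] with s hs
    have hs' : |s| < (min (min δ δ2) (min 1 (c/(2*(C+1))))) := by simpa using hs
    simp only [lt_min_iff] at hs'
    obtain ⟨⟨hs1, hs2⟩, hs3, hs4⟩ := hs'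
    have hcl : dist (Φ (θ₀ + s) u) (Φ θ₀ u) < δ := by
      have := h2 (x := s) (by simpa using hs2)
      simpa using this
    have key : ∀ t, |t| ≤ |s| → ‖iteratedDeriv p (fun τ => f τ (Φ (θ₀ + s) u)) (θ₀ + t) -
        iteratedDeriv p (fun τ => f τ (Φ θ₀ u)) θ₀‖ ≤ c/4 := by
      intro t ht
      have := h (x := (θ₀ + t, Φ (θ₀ + s) u)) (by
        rw [Prod.dist_eq]
        exact max_lt (by simpa using ht.trans_lt hs1) hcl)
      rw [dist_eq_norm] at this
      exact this.le
    have := hC s hs3 u hu (c/2) (by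
      intro t ht
      have a1 := key t ht
      have a2 := key 0 (by simp)
      rw [add_zero] at a2
      have := norm_sub_le (iteratedDeriv p (fun τ => f τ (Φ (θ₀ + s) u)) (θ₀ + t) -
        iteratedDeriv p (fun τ => f τ (Φ θ₀ u)) θ₀) (iteratedDeriv p (fun τ => f τ (Φ (θ₀ + s) u)) θ₀ -
        iteratedDeriv p (fun τ => f τ (Φ θ₀ u)) θ₀)
      rw [sub_sub_sub_cancel_right] at this
      linarith)
    refine this.trans ?_
    rw [norm_pow, Real.norm_eq_abs, pow_succ']
    have hCs : C * |s| ≤ c/2 := by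
      rw [lt_div_iff₀ (by positivity)] at hs4
      nlinarith [abs_nonneg s]
    have hp0 : 0 ≤ |s|^p := by positivity
    nlinarith

end Ext

section Step2

set_option linter.unusedVariables false
set_option linter.unusedSectionVars false

variable {E : Type us} [NormedAddCommGroup E] [NormedSpace ℂ E]
variable {f Φ : ℝ → E → E} {p : ℕ} {ε M r : ℝ} {U V : Set E}

variable [CompleteSpace E] (hU : IsOpen U) (hV : IsOpen V) (hr : 0 < r)
  (hVU : ∀ x ∈ V, ball x r ⊆ U) (hM : 0 < M) (hf : SaF f p M U) (hP : SaP Φ p ε M r U)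
include hU hV hr hVU hM hf hP

theorem sa_G_iter (m : ℕ) (hm : m ≤ p) (θ : ℝ) :
    DifferentiableOn ℂ (fun u => iteratedDeriv m (fun τ => saG f Φ τ u) θ) V ∧
    ∀ u ∈ V, ‖iteratedDeriv m (fun τ => saG f Φ τ u) θ‖ ≤ m.factorial * (4 * M) := by
  obtain ⟨Gt, hd, hb, -, ho⟩ := sa_Gt' hU hV hr hVU hM hf hP θ
  have hsl : ∀ u ∈ V, DifferentiableOn ℂ (fun z => Gt (z, u)) (ball 0 1) := fun u hu z hz =>
    (sa_param_slice hV hd hz hu).differentiableAt.differentiableWithinAt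
  have hj : ∀ u ∈ V, iteratedDeriv m (fun τ => saG f Φ τ u) θ = iteratedDeriv m (fun z => Gt (z, u)) 0 :=
    fun u hu => sa_jet (sa_G_contDiff hU hV hr hVU hM hf hP hu) (hsl u hu) (ho u hu) m hm
  constructor
  · have h1 := sa_param_iter hV hd m
    have h2 : DifferentiableOn ℂ (fun u => iteratedDeriv m (fun z => Gt (z, u)) 0) V :=
      h1.comp (f := fun u : E => ((0:ℂ), u)) ((differentiableOn_const _).prodMk differentiableOn_id)
        (fun u hu => ⟨mem_ball_self one_pos, hu⟩)
    exact h2.congr hj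
  · intro u hu
    rw [hj u hu]
    exact sa_iter_le (hsl u hu) (fun z hz => hb z hz u hu) m

theorem sa_N_deriv {u : E} (hu : u ∈ V) (θ : ℝ) :
    HasDerivAt (fun θ => u + ε • ∫ τ in (0:ℝ)..θ, saG f Φ τ u) (ε • saG f Φ θ u) θ := by
  have hc : Continuous (fun τ => saG f Φ τ u) := (sa_G_contDiff hU hV hr hVU hM hf hP hu).continuous
  exact ((intervalIntegral.integral_hasDerivAt_right (hc.intervalIntegrable _ _)
    (hc.stronglyMeasurableAtFilter _ _) hc.continuousAt).const_smul ε).const_add u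

theorem sa_N_iter {u : E} (hu : u ∈ V) (m : ℕ) (hm : m ≤ p) (θ : ℝ) :
    iteratedDeriv (m+1) (fun θ => u + ε • ∫ τ in (0:ℝ)..θ, saG f Φ τ u) θ =
      ε • iteratedDeriv m (fun τ => saG f Φ τ u) θ := by
  have h1 : deriv (fun θ => u + ε • ∫ τ in (0:ℝ)..θ, saG f Φ τ u) = fun θ => ε • saG f Φ θ u :=
    funext fun θ => (sa_N_deriv hU hV hr hVU hM hf hP hu θ).deriv
  rw [iteratedDeriv_succ', h1]
  exact iteratedDeriv_fun_const_smul ((sa_G_contDiff hU hV hr hVU hM hf hP hu).contDiffAt.of_le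
    (by exact_mod_cast hm)) ε

theorem sa_N_contDiff {u : E} (hu : u ∈ V) :
    ContDiff ℝ (p+1 : ℕ) (fun θ => u + ε • ∫ τ in (0:ℝ)..θ, saG f Φ τ u) := by
  have h1 : deriv (fun θ => u + ε • ∫ τ in (0:ℝ)..θ, saG f Φ τ u) = fun θ => ε • saG f Φ θ u :=
    funext fun θ => (sa_N_deriv hU hV hr hVU hM hf hP hu θ).deriv
  push_cast
  rw [contDiff_succ_iff_deriv]
  refine ⟨fun θ => (sa_N_deriv hU hV hr hVU hM hf hP hu θ).differentiableAt, fun h => by simp at h, ?_⟩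
  rw [h1]
  exact contDiff_const.smul (sa_G_contDiff hU hV hr hVU hM hf hP hu)

theorem sa_N_near (hε : 0 < ε) (h7 : 7 * ε * M ≤ r) {u : E} (hu : u ∈ V) (θ : ℝ) :
    ‖(u + ε • ∫ τ in (0:ℝ)..θ, saG f Φ τ u) - u‖ ≤ r / 5 := by
  rw [add_sub_cancel_left, norm_smul, Real.norm_eq_abs, abs_of_pos hε]
  have h1 := sa_G_int_le hU hV hr hVU hM hf hP hu θ
  have h2 := mul_le_mul_of_nonneg_left h1 hε.le
  have h3 : 0 < ε * M := by positivity
  nlinarith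

theorem sa_N_ext (hε : 0 < ε) (h7 : 7 * ε * M ≤ r) (θ₀ : ℝ) : ∃ Φt : ℂ × E → E,
    DifferentiableOn ℂ Φt (ball 0 1 ×ˢ V) ∧
    (∀ s ∈ ball (0:ℂ) 1, ∀ u ∈ V, ‖Φt (s, u) - u‖ ≤ 4 / 5 * r) ∧
    ∃ C : ℝ, 0 ≤ C ∧ ∀ s : ℝ, |s| < 1 → ∀ u ∈ V,
      ‖(u + ε • ∫ τ in (0:ℝ)..(θ₀ + s), saG f Φ τ u) - Φt (s, u)‖ ≤ C * |s|^(p+1) := by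
  obtain ⟨Gt, hd, hb, ⟨C, hC0, hC⟩, -⟩ := sa_Gt' hU hV hr hVU hM hf hP θ₀
  have ho := (isOpen_ball (x := (0:ℂ)) (ε := 1)).prod hV
  have hball : ∀ t ∈ uIcc (0:ℝ) 1, ∀ s ∈ ball (0:ℂ) 1, (t:ℂ) * s ∈ ball (0:ℂ) 1 := by
    intro t ht s hs
    rw [uIcc_of_le zero_le_one] at ht
    rw [mem_ball_zero_iff] at hs ⊢
    rw [norm_mul, Complex.norm_real, Real.norm_eq_abs, abs_of_nonneg ht.1]
    nlinarith [norm_nonneg s, ht.2]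
  have hcont : ∀ q ∈ ball (0:ℂ) 1 ×ˢ V, ContinuousOn (fun t : ℝ => Gt ((t:ℂ) * q.1, q.2)) (uIcc 0 1) := by
    intro q hq
    refine hd.continuousOn.comp (f := fun t : ℝ => ((t:ℂ) * q.1, q.2)) (by fun_prop) ?_
    intro t ht
    exact ⟨hball t ht q.1 hq.1, hq.2⟩
  have hIle : ∀ q ∈ ball (0:ℂ) 1 ×ˢ V, ‖∫ t in (0:ℝ)..1, Gt ((t:ℂ) * q.1, q.2)‖ ≤ 4 * M := by
    intro q hq
    have := intervalIntegral.norm_integral_le_of_norm_le_const (a := 0) (b := 1) (C := 4 * M)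
      (f := fun t : ℝ => Gt ((t:ℂ) * q.1, q.2)) (fun t ht =>
        hb _ (hball t (uIoc_subset_uIcc ht) q.1 hq.1) _ hq.2)
    simpa using this
  refine ⟨fun q => (q.2 + ε • ∫ τ in (0:ℝ)..θ₀, saG f Φ τ q.2) +
    (ε:ℂ) • (q.1 • ∫ t in (0:ℝ)..1, Gt ((t:ℂ) * q.1, q.2)), ?_, ?_, ε * C, by positivity, ?_⟩
  · refine DifferentiableOn.add (DifferentiableOn.add differentiableOn_snd ?_) ?_
    · have h1 : DifferentiableOn ℂ (fun q : ℂ × E => ∫ τ in (0:ℝ)..θ₀, saG f Φ τ q.2) (ball 0 1 ×ˢ V) :=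
        (sa_G_int_diff hU hV hr hVU hM hf hP θ₀).comp differentiableOn_snd (fun q hq => hq.2)
      exact h1.const_smul ε
    · refine DifferentiableOn.const_smul (DifferentiableOn.smul differentiableOn_fst ?_) (ε:ℂ)
      intro q hq
      obtain ⟨L, hL, -⟩ := sa_intDiff (U := ball (0:ℂ) 1 ×ˢ V) (a := 0) (b := 1)
        (h := fun (t:ℝ) (q : ℂ × E) => Gt ((t:ℂ) * q.1, q.2)) (C := 4 * M) ho
        (fun t ht => hd.comp (f := fun q : ℂ × E => ((t:ℂ) * q.1, q.2)) (by fun_prop)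
          (fun q hq => ⟨hball t ht q.1 hq.1, hq.2⟩)) hcont
        (fun t ht q hq => hb _ (hball t ht q.1 hq.1) _ hq.2) hq
      exact hL.differentiableAt.differentiableWithinAt
  · intro s hs u hu
    have h1 := sa_N_near hU hV hr hVU hM hf hP hε h7 hu θ₀
    have h2 := hIle (s, u) ⟨hs, hu⟩
    simp only at h2 ⊢
    rw [add_sub_right_comm]
    refine (norm_add_le _ _).trans ?_
    have h3 : ‖(ε:ℂ) • (s • ∫ t in (0:ℝ)..1, Gt ((t:ℂ) * s, u))‖ ≤ ε * (1 * (4 * M)) := by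
      rw [norm_smul, norm_smul, Complex.norm_real, Real.norm_eq_abs, abs_of_pos hε]
      gcongr
      exact (mem_ball_zero_iff.1 hs).le
    nlinarith
  · intro s hs u hu
    have hsC : (s:ℂ) ∈ ball (0:ℂ) 1 := by simpa using hs
    have hc : Continuous (fun τ => saG f Φ τ u) := (sa_G_contDiff hU hV hr hVU hM hf hP hu).continuous
    have h1 : (∫ τ in (0:ℝ)..(θ₀ + s), saG f Φ τ u) = (∫ τ in (0:ℝ)..θ₀, saG f Φ τ u) +
        s • ∫ t in (0:ℝ)..1, saG f Φ (θ₀ + s * t) u := by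
      rw [intervalIntegral.smul_integral_comp_add_mul (fun τ => saG f Φ τ u) s θ₀, mul_zero, mul_one,
        add_zero, intervalIntegral.integral_add_adjacent_intervals] <;> exact hc.intervalIntegrable _ _
    have h2 : (u + ε • ∫ τ in (0:ℝ)..(θ₀ + s), saG f Φ τ u) -
        ((u + ε • ∫ τ in (0:ℝ)..θ₀, saG f Φ τ u) +
          (ε:ℂ) • ((s:ℂ) • ∫ t in (0:ℝ)..1, Gt ((t:ℂ) * s, u))) =
        ε • (s • ∫ t in (0:ℝ)..1, (saG f Φ (θ₀ + s * t) u - Gt ((t:ℂ) * s, u))) := by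
      rw [intervalIntegral.integral_sub, h1, Complex.coe_smul, Complex.coe_smul]
      · simp only [smul_add, smul_sub]; abel
      · exact (hc.comp (by fun_prop : Continuous fun t : ℝ => θ₀ + s * t)).intervalIntegrable _ _
      · exact (hcont (s, u) ⟨hsC, hu⟩).intervalIntegrable
    have h3 : ‖∫ t in (0:ℝ)..1, (saG f Φ (θ₀ + s * t) u - Gt ((t:ℂ) * s, u))‖ ≤ C * |s|^p := by
      have := intervalIntegral.norm_integral_le_of_norm_le_const (a := 0) (b := 1) (C := C * |s|^p)
        (f := fun t : ℝ => (saG f Φ (θ₀ + s * t) u - Gt ((t:ℂ) * s, u))) (fun t ht => ?_)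
      · simpa using this
      rw [uIoc_of_le zero_le_one] at ht
      have hst : |s * t| ≤ |s| := by
        rw [abs_mul, abs_of_pos ht.1]; nlinarith [abs_nonneg s, ht.2]
      have h4 := hC (s * t) (hst.trans_lt hs) u hu
      rw [mul_comm (t:ℂ)]
      push_cast at h4
      exact h4.trans (by gcongr)
    simp only
    rw [h2, norm_smul, norm_smul, Real.norm_eq_abs, Real.norm_eq_abs, abs_of_pos hε]
    calc _ ≤ ε * (|s| * (C * |s|^p)) := by gcongr
      _ = _ := by ring

theorem sa_step (hε : 0 < ε) (h7 : 7 * ε * M ≤ r) (hB : ∃ B : ℝ, ∀ u ∈ V, ‖u‖ ≤ B) :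
    SaP (fun θ u => u + ε • ∫ τ in (0:ℝ)..θ, saG f Φ τ u) p ε M r V := by
  obtain ⟨B, hB⟩ := hB
  have hbd : ∀ m ≤ p, ∀ θ, ∀ u ∈ V,
      ‖iteratedDeriv (m+1) (fun θ => u + ε • ∫ τ in (0:ℝ)..θ, saG f Φ τ u) θ‖ ≤
        8 * ε * M * ((m+1).factorial : ℝ) := by
    intro m hm θ u hu
    rw [sa_N_iter hU hV hr hVU hM hf hP hu m hm, norm_smul, Real.norm_eq_abs, abs_of_pos hε]
    have h1 := (sa_G_iter hU hV hr hVU hM hf hP m hm θ).2 u hu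
    have h2 : (m.factorial : ℝ) ≤ (m+1).factorial := by exact_mod_cast Nat.factorial_le (Nat.le_succ m)
    calc _ ≤ ε * (m.factorial * (4 * M)) := by gcongr
      _ ≤ ε * ((m+1).factorial * (8 * M)) := by gcongr; norm_num
      _ = _ := by ring
  refine ⟨?_, ?_, fun θ u hu => sa_N_near hU hV hr hVU hM hf hP hε h7 hu θ,
    sa_N_ext hU hV hr hVU hM hf hP hε h7, ?_⟩
  · refine sa_hc_mk (m := p+1) hV (fun u hu => sa_N_contDiff hU hV hr hVU hM hf hP hu) ?_
      (fun ν => if ν = 0 then r/5 + B else 8 * ε * M * (ν.factorial : ℝ)) ?_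
    · intro ν hν θ
      rcases ν with _ | m
      · simp only [iteratedDeriv_zero]
        exact differentiableOn_id.add ((sa_G_int_diff hU hV hr hVU hM hf hP θ).const_smul ε)
      · have h1 := (sa_G_iter hU hV hr hVU hM hf hP m (by omega) θ).1
        exact (h1.const_smul ε).congr fun u hu =>
          sa_N_iter hU hV hr hVU hM hf hP hu m (by omega) θ
    · intro ν hν θ u hu
      rcases ν with _ | m
      · simp only [iteratedDeriv_zero, if_true]
        have h1 := sa_N_near hU hV hr hVU hM hf hP hε h7 hu θ
        have h2 := norm_add_le ((u + ε • ∫ τ in (0:ℝ)..θ, saG f Φ τ u) - u) u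
        rw [sub_add_cancel] at h2
        linarith [hB u hu]
      · simpa using hbd m (by omega) θ u hu
  · intro u hu θ
    have := sa_G_int_per hU hV hr hVU hM hf hP hu θ
    simp only at this ⊢
    rw [this]
  · intro ν h1 h2 θ u hu
    obtain ⟨m, rfl⟩ : ∃ m, ν = m + 1 := ⟨ν - 1, by omega⟩
    exact hbd m (by omega) θ u hu

end Step2

section Final

set_option linter.unusedVariables false

theorem sa_base {E : Type us} [NormedAddCommGroup E] [NormedSpace ℂ E] {p : ℕ} {ε M r : ℝ} {U : Set E}
    (hU : IsOpen U) (hε : 0 < ε) (hM : 0 < M) (hr : 0 < r) (hB : ∃ B : ℝ, ∀ u ∈ U, ‖u‖ ≤ B) :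
    SaP (fun _ u => u) p ε M r U := by
  obtain ⟨B, hB⟩ := hB
  have hz : ∀ m θ, ∀ u : E, iteratedDeriv (m+1) (fun _ : ℝ => u) θ = 0 := by
    intro m θ u; simp [iteratedDeriv_const]
  refine ⟨?_, fun _ _ _ => rfl, fun θ u hu => by simp; positivity, fun θ₀ => ⟨fun q => q.2,
    differentiableOn_snd, fun s hs u hu => by simp; positivity, 0, le_rfl, fun s hs u hu => by simp⟩, ?_⟩
  · refine sa_hc_mk (m := p+1) (φ := fun _ u => u) hU (fun u hu => contDiff_const) ?_ (fun ν => if ν = 0 then B else 0) ?_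
    · intro ν hν θ
      rcases ν with _ | m
      · simp only [iteratedDeriv_zero]; exact differentiableOn_id
      · simp only [hz]; exact differentiableOn_const _
    · intro ν hν θ u hu
      rcases ν with _ | m
      · simpa using hB u hu
      · simp [hz]
  · intro ν h1 h2 θ u hu
    obtain ⟨m, rfl⟩ : ∃ m, ν = m + 1 := ⟨ν - 1, by omega⟩
    rw [hz, norm_zero]; positivity

theorem sa_thick {E : Type*} [PseudoMetricSpace E] {S : Set E} {ρ ρ' r : ℝ} (h : ρ' + r ≤ ρ) {x : E}
    (hx : x ∈ thickening ρ' S) : ball x r ⊆ thickening ρ S := by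
  intro y hy
  rw [mem_thickening_iff] at hx ⊢
  obtain ⟨z, hz, hxz⟩ := hx
  refine ⟨z, hz, ?_⟩
  have := dist_triangle y x z
  rw [mem_ball] at hy
  linarith

end Final

/-- Proposition: under Assumptions (K) and (A_p), with `ε₀ = R/(8M)`, `rₙ = R/(n+1)`,
`R_k = 2R − k rₙ` and `(n+1)ε ≤ ε₀`: the maps `Φ^[k]`, `k ≤ n`, are analytic on `K_{R_k}`;
`Φ^[n]` and `⟨Φ^[n]⟩` are invertible with analytic inverse on `K_R`; each `Φ^[k]` is
`(p+1)` times continuously differentiable in `θ`, its θ-derivatives are analytic on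
`K_{R_k}`, and `‖∂_θ^ν Φ^[k]‖_{R_k} ≤ 8εM ν!` for `1 ≤ ν ≤ p+1`. -/
theorem statement4
    {X Xc : Type*} [NormedAddCommGroup X] [NormedSpace ℝ X] [CompleteSpace X]
    [NormedAddCommGroup Xc] [NormedSpace ℂ Xc] [CompleteSpace Xc]
    (ι : X →ₗᵢ[ℝ] Xc)
    (K U0 : Set X) (hKopen : IsOpen K) (hKbdd : Bornology.IsBounded (closure K))
    (hU0open : IsOpen U0) (hU0K : U0 ⊆ K)
    (fX : ℝ → X → X) (fC : ℝ → Xc → Xc)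
    (hper : ∀ u, Function.Periodic (fun θ => fX θ u) 1)
    (hperC : ∀ u, Function.Periodic (fun θ => fC θ u) 1)
    -- Assumption (K)
    (hAssK : ∀ u₀ ∈ U0, ∀ ε ∈ Set.Ioc (0:ℝ) 1, ∃ u : ℝ → X, u 0 = u₀ ∧
      ∀ t ∈ Set.Icc (0:ℝ) 1, HasDerivAt u (fX (t/ε) (u t)) t ∧ u t ∈ K)
    -- Assumption (A_p)
    (p : ℕ) (hp : 1 ≤ p)
    (R M : ℝ) (hR : 0 < R) (hM : 0 < M)
    (hcontdiffθ : ∀ u, ContDiff ℝ p (fun θ => fC θ u))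
    (hext : ∀ θ, ∀ x : X, ι x ∈ Kset ι K (2*R) → fC θ (ι x) = ι (fX θ x))
    (hanal : ∀ ν ≤ p, ∀ θ : ℝ,
      AnalyticOn ℂ (fun u => iteratedDeriv ν (fun τ => fC τ u) θ) (Kset ι K (2*R)))
    (hbound : ∀ σ ∈ Set.Ioc (0:ℝ) 3, ∀ ν ≤ p, ∀ θ : ℝ, ∀ u ∈ Kset ι K (2*R),
      σ^ν / (Nat.factorial ν) * ‖iteratedDeriv ν (fun τ => fC τ u) θ‖ ≤ M)
    -- the regime of the proposition
    (ε₀ rn : ℝ) (hε₀ : ε₀ = R / (8*M))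
    (n : ℕ) (hn : 1 ≤ n) (hrn : rn = R / (n+1))
    (Rk : ℕ → ℝ) (hRk : ∀ k, Rk k = 2*R - k * rn)
    (ε : ℝ) (hε : 0 < ε) (hnε : (n+1 : ℝ) * ε ≤ ε₀) :
    -- the maps Φ^[k] are analytic on K_{R_k}
    (∀ k ≤ n, ∀ θ : ℝ, AnalyticOn ℂ (PhiIter fC ε k θ) (Kset ι K (Rk k))) ∧
    -- Φ^[n]_θ is invertible with analytic inverse on K_R, for every θ
    (∃ Ψ : ℝ → Xc → Xc, ∀ θ, AnalyticOn ℂ (Ψ θ) (Kset ι K R) ∧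
        (∀ u ∈ Kset ι K R, PhiIter fC ε n θ (Ψ θ u) = u) ∧
        (∀ u ∈ Kset ι K R, Ψ θ (PhiIter fC ε n θ u) = u)) ∧
    -- ⟨Φ^[n]⟩ is invertible with analytic inverse on K_R
    (∃ χ : Xc → Xc, AnalyticOn ℂ χ (Kset ι K R) ∧
        (∀ u ∈ Kset ι K R, thAvg (PhiIter fC ε n) (χ u) = u) ∧
        (∀ u ∈ Kset ι K R, χ (thAvg (PhiIter fC ε n) u) = u)) ∧
    -- each Φ^[k] is (p+1) times continuously differentiable w.r.t. θ
    (∀ k ≤ n, ∀ u ∈ Kset ι K (Rk k),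
        ContDiff ℝ (p+1) (fun θ => PhiIter fC ε k θ u)) ∧
    -- the θ-derivatives are analytic in u on K_{R_k}
    (∀ k ≤ n, ∀ ν, 1 ≤ ν → ν ≤ p+1 → ∀ θ : ℝ,
        AnalyticOn ℂ (fun u => iteratedDeriv ν (fun τ => PhiIter fC ε k τ u) θ)
          (Kset ι K (Rk k))) ∧
    -- ‖∂_θ^ν Φ^[k]‖_{R_k} ≤ 8 ε M ν!
    (∀ k ≤ n, ∀ ν, 1 ≤ ν → ν ≤ p+1 → ∀ θ : ℝ, ∀ u ∈ Kset ι K (Rk k),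
        ‖iteratedDeriv ν (fun τ => PhiIter fC ε k τ u) θ‖ ≤
          8 * ε * M * (Nat.factorial ν)) := by
  set S : Set Xc := Set.image ι (closure K) with hS
  have hKT : ∀ {ρ ρ' : ℝ}, ρ < ρ' → Kset ι K ρ ⊆ thickening ρ' S := by
    rintro ρ ρ' h z ⟨u, hu, w, hw, rfl⟩
    rw [mem_thickening_iff]
    exact ⟨ι u, ⟨u, hu, rfl⟩, by rw [dist_eq_norm, add_sub_cancel_left]; linarith⟩
  have hTK : ∀ ρ : ℝ, thickening ρ S ⊆ Kset ι K ρ := by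
    intro ρ z hz
    rw [mem_thickening_iff] at hz
    obtain ⟨_, ⟨u, hu, rfl⟩, hd⟩ := hz
    exact ⟨u, hu, z - ι u, by rw [← dist_eq_norm]; exact hd.le, by abel⟩
  have hSb : Bornology.IsBounded S := ι.lipschitz.isBounded_image hKbdd
  have hTB : ∀ ρ : ℝ, ∃ B : ℝ, ∀ u ∈ thickening ρ S, ‖u‖ ≤ B := fun ρ =>
    (hSb.thickening (δ := ρ)).exists_norm_le
  have hn0 : (0:ℝ) < (n:ℝ) + 1 := by positivity
  have hrn0 : 0 < rn := by rw [hrn]; positivity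
  have hrnR : (n + 1 : ℝ) * rn = R := by rw [hrn]; field_simp
  have h8 : 8 * ε * M ≤ rn := by
    rw [hε₀, le_div_iff₀ (by positivity)] at hnε
    rw [hrn, le_div_iff₀ hn0]
    linarith
  set r : ℝ := 7/8 * rn with hrdef
  have hr : 0 < r := by positivity
  have h7 : 7 * ε * M ≤ r := by rw [hrdef]; linarith
  set ρ : ℕ → ℝ := fun k => 2 * R - k * r with hρ
  have hFb : SaF fC p M (thickening (2*R) S) := by
    refine ⟨?_, hperC, fun ν hν θ u hu => hbound 3 ⟨by norm_num, le_rfl⟩ ν hν θ u (hTK _ hu)⟩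
    refine sa_hc_mk isOpen_thickening (fun u _ => hcontdiffθ u)
      (fun ν hν θ => (hanal ν hν θ).differentiableOn.mono (hTK _))
      (fun ν => M * ν.factorial / 3^ν) ?_
    intro ν hν θ u hu
    have := hbound 3 ⟨by norm_num, le_rfl⟩ ν hν θ u (hTK _ hu)
    rw [le_div_iff₀ (by positivity)]
    rw [div_mul_eq_mul_div, div_le_iff₀ (by positivity)] at this
    linarith
  have hρle : ∀ k, ρ k ≤ 2 * R := fun k => by
    have : 0 ≤ (k:ℝ) * r := by positivity
    simp only [hρ]; linarith
  have hF : ∀ k, SaF fC p M (thickening (ρ k) S) := fun k =>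
    ⟨sa_hc_mono hFb.hc le_rfl isOpen_thickening (thickening_mono (hρle k) S), hperC,
      fun ν hν θ u hu => hFb.bd ν hν θ u (thickening_mono (hρle k) S hu)⟩
  have hP : ∀ k, SaP (PhiIter fC ε k) p ε M r (thickening (ρ k) S) := by
    intro k
    induction k with
    | zero => exact sa_base isOpen_thickening hε hM hr (hTB _)
    | succ k ih =>
      exact sa_step (U := thickening (ρ k) S) isOpen_thickening isOpen_thickening hr
        (fun x hx => sa_thick (by simp only [hρ]; push_cast; linarith) hx) hM (hF k) ih hε h7 (hTB _)
  have hsub : ∀ k, 1 ≤ k → Kset ι K (Rk k) ⊆ thickening (ρ k) S := by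
    intro k hk
    apply hKT
    rw [hRk]
    have : (1:ℝ) ≤ k := by exact_mod_cast hk
    simp only [hρ, hrdef]
    nlinarith
  have hz : ∀ ν, 1 ≤ ν → ∀ θ, ∀ u : Xc, iteratedDeriv ν (fun _ : ℝ => u) θ = 0 := by
    intro ν hν θ u
    obtain ⟨m, rfl⟩ : ∃ m, ν = m + 1 := ⟨ν - 1, by omega⟩
    simp [iteratedDeriv_const]
  have hRV : Kset ι K R ⊆ thickening (ρ n - r) S := by
    apply hKT
    have : (0:ℝ) ≤ n * rn := by positivity
    simp only [hρ, hrdef]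
    nlinarith
  have hVU : ∀ x ∈ thickening (ρ n - r) S, ball x (5 * (r/5)) ⊆ thickening (ρ n) S := fun x hx =>
    sa_thick (by linarith) hx
  refine ⟨?_, ?_, ?_, ?_, ?_, ?_⟩
  · intro k hk θ
    rcases Nat.eq_zero_or_pos k with rfl | hk0
    · exact analyticOn_id
    · exact (sa_analytic isOpen_thickening ((hP k).diff θ)).analyticOn.mono (hsub k hk0)
  · have h1 : ∀ θ, ∃ Ψ : Xc → Xc, _ := fun θ =>
      sa_inv (a := r/5) (by positivity) ((hP n).diff θ) ((hP n).near θ) hVU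
    choose Ψ hΨ using h1
    refine ⟨Ψ, fun θ => ⟨?_, fun u hu => (hΨ θ).2.1 u (hRV hu), fun u hu => (hΨ θ).2.2 u (hRV hu)⟩⟩
    exact (sa_analytic isOpen_thickening (hΨ θ).1).analyticOn.mono hRV
  · obtain ⟨χ, hχ⟩ := sa_inv (a := r/5) (φ := thAvg (PhiIter fC ε n)) (by positivity)
      (fun v hv => ((hP n).avg isOpen_thickening hv).1.differentiableWithinAt)
      (fun v hv => (hP n).avg_near hv) hVU
    exact ⟨χ, (sa_analytic isOpen_thickening hχ.1).analyticOn.mono hRV,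
      fun u hu => hχ.2.1 u (hRV hu), fun u hu => hχ.2.2 u (hRV hu)⟩
  · intro k hk u hu
    rcases Nat.eq_zero_or_pos k with rfl | hk0
    · exact contDiff_const
    · exact_mod_cast (hP k).contDiff (hsub k hk0 hu)
  · intro k hk ν h1 h2 θ
    rcases Nat.eq_zero_or_pos k with rfl | hk0
    · simp only [PhiIter, hz ν h1]
      exact analyticOn_const
    · exact (sa_analytic isOpen_thickening ((hP k).hc.diff ν h2 θ)).analyticOn.mono (hsub k hk0)
  · intro k hk ν h1 h2 θ u hu
    rcases Nat.eq_zero_or_pos k with rfl | hk0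
    · simp only [PhiIter, hz ν h1, norm_zero]
      positivity
    · exact (hP k).bd ν h1 h2 θ u (hsub k hk0 hu)
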